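/- arXiv:2104.07027 — 2 statements merged into one kernel-verified Lean document; each statement's English description precedes it below -/
import Mathlib

section
/- Let n ≥ 1, p ∈ (0,∞), and let ψ : 𝒰(Mₙ(ℂ)) → 𝒰(Mₙ(ℂ)) be a surjective L^p-isometry. Then there exist unitary matrices W, V ∈ Mₙ(ℂ) such that one of the following four forms holds for every U ∈ 𝒰(Mₙ(ℂ)): ψ(U) = W·(V U Vᴴ), ψ(U) = W·(V Uᵀ Vᴴ), ψ(U) = W·(V Uᴴ Vᴴ), or ψ(U) = W·(V conj(U) Vᴴ), where conj(U) denotes entrywise complex conjugation. (These four forms encode ψ(U) = Wφ(U) or ψ(U) = Wφ(U*) with φ a *-automorphism or *-anti-automorphism of Mₙ(ℂ), since every *-automorphism of Mₙ(ℂ) is U ↦ VUVᴴ and every *-anti-automorphism is U ↦ VUᵀVᴴ for a unitary V.) -/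
open Matrix
open scoped ComplexOrder

/-- The normalized trace `L^p`-(quasi-)norm `(τ(|A|^p))^{1/p}` of a complex matrix,
computed via the eigenvalues of `Aᴴ * A`: the eigenvalues of `|A|^p` are the
`(p/2)`-th powers of those of `Aᴴ * A`, and the trace of a Hermitian matrix is the
sum of its eigenvalues. -/
noncomputable def lpnorm {m : Type*} [Fintype m] [DecidableEq m] (p : ℝ)
    (A : Matrix m m ℂ) : ℝ :=
  ((∑ i, ((Matrix.posSemidef_conjTranspose_mul_self A).isHermitian.eigenvalues i) ^ (p / 2)) /
      (Fintype.card m : ℝ)) ^ (1 / p)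

/-- The `ℓ² → ℓ²` operator norm of a complex matrix. -/
noncomputable def l2opNorm {m : Type*} [Fintype m] [DecidableEq m]
    (A : Matrix m m ℂ) : ℝ :=
  ‖Matrix.toEuclideanCLM (𝕜 := ℂ) A‖

/-!
The `p`-th power of the Schatten quasinorm makes the unitary group a compact space on which `ψ` is
a bijection preserving a bi-invariant gauge. The reflection `u ↦ v u⁻¹ v` expands this gauge near
its fixed point `v`, by the identity `|u* - u|² = |u - 1|² (4 - |u - 1|²)`. A gauge-preserving
bijection that fixes `a` and `reflection v a` must then fix `v`: otherwise iterating commutators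
with the reflection would enlarge the displacement of `v` beyond the diameter. Hence `ψ` locally
preserves the operation `v u⁻¹ v`, carries one-parameter groups to one-parameter groups, and, once
normalized by `ψ 1 = 1`, satisfies `ψ (exp (iH)) = exp (i f H)` with `f` real-linear.

Comparing distances to `1` for small `t` in `exp (itH)` shows that `f` preserves the Schatten
`p`-quasinorm. If `P` is a rank-one projection, then `exp (2πi P) = 1` forces `f P` to have integer
eigenvalues, and the norm leaves only `±` a rank-one projection; the sign does not depend on `P`
because the unit sphere is connected. Up to this sign, `f` preserves transition probabilities
between rank-one projections, and Wigner's theorem identifies it as a unitary or antiunitary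
congruence.
-/

section Compactness

variable {X : Type*} {d : X → X → ℝ} {ψ : X → X}

theorem continuous_of_preserves_gauge [PseudoMetricSpace X]
    (small_of_dist : ∀ ε > 0, ∃ δ > 0, ∀ x y, dist x y < δ → d x y < ε)
    (dist_of_small : ∀ ε > 0, ∃ δ > 0, ∀ x y, d x y < δ → dist x y < ε)
    (hψ : ∀ x y, d (ψ x) (ψ y) = d x y) : Continuous ψ :=
  Metric.continuous_iff.mpr fun y ε hε => by
    obtain ⟨η, hη, hdist⟩ := dist_of_small ε hε
    obtain ⟨δ, hδ, hsmall⟩ := small_of_dist η hη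
    exact ⟨δ, hδ, fun x hxy => hdist _ _ (hψ x y ▸ hsmall x y hxy)⟩

-- Every orbit returns arbitrarily close to its starting point.
theorem surjective_of_preserves_gauge [MetricSpace X] [CompactSpace X]
    (small_of_dist : ∀ ε > 0, ∃ δ > 0, ∀ x y, dist x y < δ → d x y < ε)
    (dist_of_small : ∀ ε > 0, ∃ δ > 0, ∀ x y, d x y < δ → dist x y < ε)
    (hψ : ∀ x y, d (ψ x) (ψ y) = d x y) : Function.Surjective ψ := by
  have hcont : Continuous ψ := continuous_of_preserves_gauge small_of_dist dist_of_small hψ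
  intro x
  have hiter : ∀ k y z, d (ψ^[k] y) (ψ^[k] z) = d y z := fun k => by
    induction k with
    | zero => simp
    | succ k ih =>
      intro y z
      rw [Function.iterate_succ_apply', Function.iterate_succ_apply', hψ, ih]
  suffices hx : x ∈ closure (Set.range ψ) by
    rwa [(isCompact_range hcont).isClosed.closure_eq] at hx
  refine Metric.mem_closure_iff.mpr fun ε hε => ?_
  obtain ⟨η, hη, hdist⟩ := dist_of_small ε hε
  obtain ⟨δ, hδ, hsmall⟩ := small_of_dist η hη
  obtain ⟨_, φ, hφ, hlim⟩ := CompactSpace.tendsto_subseq fun k => ψ^[k] x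
  obtain ⟨N, hN⟩ := Metric.cauchySeq_iff'.mp hlim.cauchySeq δ hδ
  obtain ⟨k, hk⟩ := Nat.exists_eq_add_of_lt (hφ N.lt_succ_self)
  have hreturn : d (ψ^[φ N] (ψ (ψ^[k] x))) (ψ^[φ N] x) < η := by
    rw [← Function.iterate_succ_apply' ψ, ← Function.iterate_add_apply, Nat.succ_eq_add_one,
      ← add_assoc, ← hk]
    exact hsmall _ _ (hN _ N.le_succ)
  rw [hiter] at hreturn
  exact ⟨_, ⟨_, rfl⟩, dist_comm x _ ▸ hdist _ _ hreturn⟩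

end Compactness

section SwapExpansion

variable {X : Type*} {d : X → X → ℝ} {C K : ℝ} {φ : Equiv.Perm X} {a b c : X}

-- Replacing `f` by `φ f⁻¹ φ f` multiplies the displacement of `b` by at least `K`.
theorem pow_mul_gauge_le (hK : 0 ≤ K) (hC : ∀ x y, d x y ≤ C)
    (hφ : ∀ x y, d (φ x) (φ y) = d x y) (hac : φ a = c) (hca : φ c = a) (hb : φ b = b)
    (hexp : ∀ x, d x a = d b a → K * d x b ≤ d (φ x) x) (k : ℕ) :
    ∀ f : Equiv.Perm X, (∀ x y, d (f x) (f y) = d x y) → f a = a → f c = c →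
      K ^ k * d (f b) b ≤ C := by
  induction k with
  | zero => intro f _ _ _; simpa using hC _ _
  | succ k ih =>
    intro f hf hfa hfc
    have hfi : ∀ x y, d (f⁻¹ x) (f⁻¹ y) = d x y := fun x y => by rw [← hf]; simp
    have hfia : f⁻¹ a = a := by rw [Equiv.Perm.inv_eq_iff_eq, hfa]
    have hfic : f⁻¹ c = c := by rw [Equiv.Perm.inv_eq_iff_eq, hfc]
    have hbound := ih (φ * f⁻¹ * φ * f)
      (fun x y => by simp only [Equiv.Perm.mul_apply, hφ, hfi, hf])
      (by simp only [Equiv.Perm.mul_apply, hfa, hac, hfic, hca])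
      (by simp only [Equiv.Perm.mul_apply, hfc, hac, hfia, hca])
    have hdispl : d ((φ * f⁻¹ * φ * f) b) b = d (φ (f b)) (f b) := by
      calc d ((φ * f⁻¹ * φ * f) b) b = d (φ (f⁻¹ (φ (f b)))) (φ b) := by rw [hb]; rfl
        _ = d (f⁻¹ (φ (f b))) b := hφ _ _
        _ = d (φ (f b)) (f b) := by rw [← hf]; simp
    calc K ^ (k + 1) * d (f b) b = K ^ k * (K * d (f b) b) := by ring
      _ ≤ K ^ k * d (φ (f b)) (f b) := by
        gcongr
        exact hexp _ (by conv_lhs => rw [← hfa, hf])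
      _ ≤ C := hdispl ▸ hbound

theorem gauge_map_eq_zero_of_expanding_swap (hK : 1 < K) (hC : ∀ x y, d x y ≤ C)
    (hnonneg : ∀ x y, 0 ≤ d x y)
    (hφ : ∀ x y, d (φ x) (φ y) = d x y) (hac : φ a = c) (hca : φ c = a) (hb : φ b = b)
    (hexp : ∀ x, d x a = d b a → K * d x b ≤ d (φ x) x) {f : Equiv.Perm X}
    (hf : ∀ x y, d (f x) (f y) = d x y) (hfa : f a = a) (hfc : f c = c) : d (f b) b = 0 := by
  by_contra hne
  have hpos : 0 < d (f b) b := (hnonneg _ _).lt_of_ne' hne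
  obtain ⟨k, hk⟩ := pow_unbounded_of_one_lt (C / d (f b) b) hK
  rw [div_lt_iff₀ hpos] at hk
  exact (pow_mul_gauge_le (by linarith) hC hφ hac hca hb hexp k f hf hfa hfc).not_gt hk

end SwapExpansion

section Gauge

open Filter Topology selfAdjoint Unitary

variable {A : Type*} [CStarAlgebra A]

instance : IsIsometricSMul (unitary A) (unitary A) :=
  ⟨fun w => Isometry.of_dist_eq fun u v => by simp [Subtype.dist_eq, dist_eq_norm, ← mul_sub]⟩

instance : IsIsometricSMul (unitary A)ᵐᵒᵖ (unitary A) :=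
  ⟨fun w => Isometry.of_dist_eq fun u v => by simp [Subtype.dist_eq, dist_eq_norm, ← sub_mul]⟩

/-- A bi-invariant distance-like function on the unitary group of a C⋆-algebra, uniformly
equivalent to the norm distance, for which the reflections `u ↦ v u⁻¹ v` are uniformly expanding
near `v`. The triangle inequality is not required, so `L^p`-quasi-norms with `p < 1` qualify. -/
structure UnitaryGauge (d : unitary A → unitary A → ℝ) (K : ℝ) : Prop where
  nonneg : ∀ u v, 0 ≤ d u v
  bounded : ∃ C, ∀ u v, d u v ≤ C
  mul_left : ∀ w u v, d (w * u) (w * v) = d u v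
  mul_right : ∀ w u v, d (u * w) (v * w) = d u v
  inv : ∀ u v, d u⁻¹ v⁻¹ = d u v
  small_of_dist : ∀ ε > 0, ∃ δ > 0, ∀ u v, dist u v < δ → d u v < ε
  dist_of_small : ∀ ε > 0, ∃ δ > 0, ∀ u v, d u v < δ → dist u v < ε
  one_lt : 1 < K
  expanding : ∀ u v, dist u v ≤ 1 → K * d u v ≤ d (v * u⁻¹ * v) u

/-- The reflection `u ↦ v u⁻¹ v` of a group about `v`. -/
def reflection {G : Type*} [Group G] (v : G) : Equiv.Perm G where
  toFun u := v * u⁻¹ * v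
  invFun u := v * u⁻¹ * v
  left_inv u := by group
  right_inv u := by group

theorem reflection_apply {G : Type*} [Group G] (v u : G) : reflection v u = v * u⁻¹ * v := rfl

theorem reflection_self {G : Type*} [Group G] (v : G) : reflection v v = v := by
  simp [reflection_apply]

theorem reflection_reflection {G : Type*} [Group G] (v u : G) :
    reflection v (reflection v u) = u :=
  (reflection v).left_inv u

theorem dist_reflection_self (u v : unitary A) : dist v (reflection v u) = dist u v := by
  rw [← dist_mul_left (v * u⁻¹) u v, reflection_apply, inv_mul_cancel_right]

theorem exists_unitary_sqrt {w : unitary A} (hw : dist w 1 < 2) :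
    ∃ r : unitary A, r * r = w ∧ dist r 1 ≤ dist w 1 := by
  have hwlt : ‖(w - 1 : A)‖ < 2 := by simpa [Subtype.dist_eq, dist_eq_norm] using hw
  refine ⟨expUnitary ((1 / 2 : ℝ) • argSelfAdjoint w), ?_, ?_⟩
  · rw [← Commute.expUnitary_add (Commute.refl _), ← add_smul]
    norm_num [expUnitary_argSelfAdjoint hwlt]
  · simpa [Subtype.dist_eq, dist_eq_norm] using
      norm_expUnitary_smul_argSelfAdjoint_sub_one_le w (t := 1 / 2) (by norm_num) hwlt

theorem exists_reflection_eq {u v : unitary A} (huv : dist u v < 2) :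
    ∃ m : unitary A, reflection m u = v ∧ dist m u ≤ dist u v := by
  have hw : dist (u⁻¹ * v) 1 = dist u v := by
    rw [← dist_mul_left u, dist_comm]; simp
  obtain ⟨r, hr, hr1⟩ := exists_unitary_sqrt (hw.trans_lt huv)
  refine ⟨u * r, ?_, ?_⟩
  · calc u * r * u⁻¹ * (u * r) = u * (r * r) := by group
      _ = v := by rw [hr, mul_inv_cancel_left]
  · calc dist (u * r) u = dist r 1 := by simpa using dist_mul_left u r 1
      _ ≤ dist u v := hw ▸ hr1

namespace UnitaryGauge

variable {d : unitary A → unitary A → ℝ} {K : ℝ}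

theorem self (h : UnitaryGauge d K) (u : unitary A) : d u u = 0 := by
  refine le_antisymm (le_of_forall_pos_lt_add fun ε hε => ?_) (h.nonneg u u)
  obtain ⟨δ, hδ, hsmall⟩ := h.small_of_dist ε hε
  simpa using hsmall u u (by simpa using hδ)

theorem eq_of_eq_zero (h : UnitaryGauge d K) {u v : unitary A} (huv : d u v = 0) : u = v := by
  refine eq_of_forall_dist_le fun ε hε => ?_
  obtain ⟨δ, hδ, hdist⟩ := h.dist_of_small ε hε
  exact (hdist u v (huv ▸ hδ)).le

theorem gauge_reflection (h : UnitaryGauge d K) (w u v : unitary A) :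
    d (reflection w u) (reflection w v) = d u v := by
  simp only [reflection_apply, h.mul_right, h.mul_left, h.inv]

theorem eq_of_reflection_eq_self (h : UnitaryGauge d K) {u v : unitary A} (huv : dist u v ≤ 1)
    (hfix : reflection v u = u) : u = v := by
  have hexp := h.expanding u v huv
  rw [← reflection_apply, hfix, h.self] at hexp
  exact h.eq_of_eq_zero (le_antisymm (by nlinarith [h.one_lt, h.nonneg u v]) (h.nonneg _ _))

theorem continuous_of_isometry (h : UnitaryGauge d K) {ψ : unitary A → unitary A}
    (hψ : ∀ u v, d (ψ u) (ψ v) = d u v) : Continuous ψ :=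
  continuous_of_preserves_gauge h.small_of_dist h.dist_of_small hψ

theorem bijective_of_isometry [CompactSpace (unitary A)] (h : UnitaryGauge d K)
    {ψ : unitary A → unitary A} (hψ : ∀ u v, d (ψ u) (ψ v) = d u v) : Function.Bijective ψ :=
  ⟨fun u v huv => h.eq_of_eq_zero (by rw [← hψ, huv, h.self]),
    surjective_of_preserves_gauge h.small_of_dist h.dist_of_small hψ⟩

theorem map_eq_of_reflection_map_eq (h : UnitaryGauge d K) {ψ : Equiv.Perm (unitary A)}
    (hψ : ∀ u v, d (ψ u) (ψ v) = d u v) {a b b' : unitary A}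
    (hnear : ∀ u, d u a = d b a → dist u b ≤ 1) (hb' : reflection b' (ψ a) = ψ (reflection b a))
    (hdist : dist (ψ b) b' ≤ 1) : ψ b = b' := by
  have hψi : ∀ u v, d (ψ⁻¹ u) (ψ⁻¹ v) = d u v := fun u v => by rw [← hψ]; simp
  have hb'c : reflection b' (ψ (reflection b a)) = ψ a := by rw [← hb', reflection_reflection]
  obtain ⟨C, hC⟩ := h.bounded
  have hfix : reflection b (ψ⁻¹ (reflection b' (ψ b))) = b :=
    h.eq_of_eq_zero <| gauge_map_eq_zero_of_expanding_swap h.one_lt hC h.nonneg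
      (φ := reflection b) (f := reflection b * ψ⁻¹ * reflection b' * ψ) (h.gauge_reflection b)
      (a := a) rfl (reflection_reflection b a) (reflection_self b)
      (fun u hu => h.expanding u b (hnear u hu))
      (fun u v => by simp only [Equiv.Perm.mul_apply, h.gauge_reflection, hψi, hψ])
      (by simp [Equiv.Perm.mul_apply, hb', reflection_reflection])
      (by simp [Equiv.Perm.mul_apply, hb'c])
  refine h.eq_of_reflection_eq_self hdist ?_
  rw [← Equiv.Perm.inv_eq_iff_eq]
  exact (reflection b).injective (hfix.trans (reflection_self b).symm)

theorem exists_map_reflection (h : UnitaryGauge d K) {ψ : Equiv.Perm (unitary A)}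
    (hψ : ∀ u v, d (ψ u) (ψ v) = d u v) :
    ∃ δ > 0, ∀ a b, dist a b < δ → ψ (reflection b a) = reflection (ψ b) (ψ a) := by
  obtain ⟨η, hη, hdist⟩ := h.dist_of_small (1 / 4) (by norm_num)
  obtain ⟨δ, hδ, hsmall⟩ := h.small_of_dist η hη
  refine ⟨min (δ / 2) (1 / 4), by positivity, fun a b hab => ?_⟩
  have habδ : dist a b < δ / 2 := hab.trans_le (min_le_left _ _)
  have hab4 : dist a b < 1 / 4 := hab.trans_le (min_le_right _ _)
  have hψab : dist (ψ a) (ψ b) < 1 / 4 := hdist _ _ (hψ a b ▸ hsmall a b (by linarith))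
  have hψac : dist (ψ a) (ψ (reflection b a)) < 1 / 4 := by
    refine hdist _ _ (hψ a _ ▸ hsmall a _ ?_)
    linarith [dist_triangle a b (reflection b a), dist_reflection_self a b]
  obtain ⟨b', hb', hb'a⟩ := exists_reflection_eq (hψac.trans (by norm_num))
  rw [h.map_eq_of_reflection_map_eq hψ ?_ hb' ?_, hb']
  · intro u hu
    have hua := hdist u a (hu ▸ hsmall b a (by rw [dist_comm]; linarith))
    linarith [dist_triangle u a b]
  · linarith [dist_triangle (ψ b) (ψ a) b', dist_comm (ψ b) (ψ a), dist_comm b' (ψ a)]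

end UnitaryGauge

theorem dist_pow_pow_le {G : Type*} [Monoid G] [PseudoMetricSpace G] [IsIsometricSMul G G]
    [IsIsometricSMul Gᵐᵒᵖ G] (u v : G) (k : ℕ) : dist (u ^ k) (v ^ k) ≤ k * dist u v := by
  induction k with
  | zero => simp
  | succ k ih =>
    calc dist (u ^ (k + 1)) (v ^ (k + 1))
        ≤ dist (u ^ k * u) (u ^ k * v) + dist (u ^ k * v) (v ^ k * v) := by
          rw [pow_succ, pow_succ]; exact dist_triangle _ _ _
      _ = dist u v + dist (u ^ k) (v ^ k) := by rw [dist_mul_left, dist_mul_right]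
      _ ≤ (k + 1 : ℕ) * dist u v := by push_cast; linarith

theorem expUnitary_add_smul (s t : ℝ) (H : selfAdjoint A) :
    expUnitary ((s + t) • H) = expUnitary (s • H) * expUnitary (t • H) := by
  rw [add_smul, Commute.expUnitary_add]
  simp only [selfAdjoint.val_smul]
  exact ((Commute.refl (H : A)).smul_left s).smul_right t

theorem expUnitary_natCast_smul (k : ℕ) (H : selfAdjoint A) :
    expUnitary ((k : ℝ) • H) = expUnitary H ^ k := by
  induction k with
  | zero => simp
  | succ k ih => rw [Nat.cast_succ, expUnitary_add_smul, ih, one_smul, pow_succ]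

theorem expUnitary_neg (H : selfAdjoint A) : expUnitary (-H) = (expUnitary H)⁻¹ := by
  refine eq_inv_of_mul_eq_one_left ?_
  simpa using (expUnitary_add_smul (-1) 1 H).symm

theorem expUnitary_inv_natCast_smul_pow {k : ℕ} (hk : k ≠ 0) (H : selfAdjoint A) :
    expUnitary ((k : ℝ)⁻¹ • H) ^ k = expUnitary H := by
  rw [← expUnitary_natCast_smul, smul_inv_smul₀ (Nat.cast_ne_zero.mpr hk)]

theorem expUnitary_injOn_ball_pi :
    Set.InjOn (expUnitary : selfAdjoint A → unitary A) (Metric.ball 0 Real.pi) :=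
  fun H hH G hG h => by
    rw [mem_ball_zero_iff] at hH hG
    rw [← argSelfAdjoint_expUnitary hH, h, argSelfAdjoint_expUnitary hG]

theorem continuous_expUnitary_smul (H : selfAdjoint A) :
    Continuous fun t : ℝ => expUnitary (t • H) :=
  continuous_expUnitary.comp (continuous_id.smul continuous_const)

theorem norm_inv_two_pow_smul_le {E : Type*} [SeminormedAddCommGroup E] [NormedSpace ℝ E]
    (k : ℕ) (x : E) : ‖((2 : ℝ) ^ k)⁻¹ • x‖ ≤ ‖x‖ := by
  rw [norm_smul, norm_inv, norm_pow, Real.norm_two]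
  exact mul_le_of_le_one_left (norm_nonneg _) (inv_le_one_of_one_le₀ (one_le_pow₀ one_le_two))

theorem tendsto_inv_natCast_smul (H : selfAdjoint A) :
    Tendsto (fun m : ℕ => (m : ℝ)⁻¹ • H) atTop (𝓝 0) := by
  simpa using (tendsto_inv_atTop_nhds_zero_nat (𝕜 := ℝ)).smul_const H

theorem hasDerivAt_expUnitary_smul (H : selfAdjoint A) :
    HasDerivAt (fun t : ℝ => (expUnitary (t • H) : A)) (Complex.I • (H : A)) 0 := by
  have hexp := hasDerivAt_exp_smul_const (𝕂 := ℝ) (Complex.I • (H : A)) 0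
  simp only [zero_smul, NormedSpace.exp_zero, one_mul] at hexp
  refine hexp.congr_of_eventuallyEq (Eventually.of_forall fun t => ?_)
  simp [expUnitary_coe, smul_comm t Complex.I]

/-- The palindromic product `exp (itH/2) exp (itG) exp (itH/2)`, which agrees with
`exp (it(H + G))` to first order in `t`. It is the reflection of `exp (-itG)` about
`exp (itH/2)`. -/
noncomputable def symmExpProd (H G : selfAdjoint A) (t : ℝ) : unitary A :=
  reflection (expUnitary (t • (1 / 2 : ℝ) • H)) (expUnitary (t • G))⁻¹

theorem continuous_symmExpProd (H G : selfAdjoint A) : Continuous (symmExpProd H G) := by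
  have hhalf := continuous_expUnitary_smul ((1 / 2 : ℝ) • H)
  unfold symmExpProd
  simp only [reflection_apply, inv_inv]
  exact (hhalf.mul (continuous_expUnitary_smul G)).mul hhalf

theorem hasDerivAt_symmExpProd (H G : selfAdjoint A) :
    HasDerivAt (fun t => (symmExpProd H G t : A)) (Complex.I • ((H + G : selfAdjoint A) : A))
      0 := by
  have hhalf := hasDerivAt_expUnitary_smul ((1 / 2 : ℝ) • H)
  refine ((((hhalf.mul (hasDerivAt_expUnitary_smul G)).mul hhalf).congr_deriv ?_)
    |>.congr_of_eventuallyEq (Eventually.of_forall fun t => ?_))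
  · simp only [Pi.mul_apply, zero_smul, expUnitary_zero, OneMemClass.coe_one, mul_one, one_mul,
      AddSubgroup.coe_add, smul_add, selfAdjoint.val_smul]
    rw [smul_comm Complex.I (1 / 2 : ℝ) (H : A)]
    module
  · simp [symmExpProd, reflection_apply]

theorem tendsto_symmExpProd_pow (H G : selfAdjoint A) :
    Tendsto (fun m : ℕ => symmExpProd H G (m : ℝ)⁻¹ ^ m) atTop (𝓝 (expUnitary (H + G))) := by
  have hder : HasDerivAt
      (fun t : ℝ => (symmExpProd H G t : A) - expUnitary (t • (H + G))) 0 0 := by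
    simpa only [sub_self] using
      (hasDerivAt_symmExpProd H G).fun_sub (hasDerivAt_expUnitary_smul (H + G))
  have hinv : Tendsto (fun m : ℕ => (m : ℝ)⁻¹) atTop (𝓝[≠] (0 : ℝ)) :=
    tendsto_nhdsWithin_iff.mpr ⟨tendsto_inv_atTop_nhds_zero_nat,
      (eventually_gt_atTop 0).mono fun m hm => by simpa using hm.ne'⟩
  have hlim : Tendsto (fun m : ℕ =>
      (m : ℝ) * dist (symmExpProd H G (m : ℝ)⁻¹) (expUnitary ((m : ℝ)⁻¹ • (H + G))))
      atTop (𝓝 0) := by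
    have hslope := ((hasDerivAt_iff_tendsto_slope_zero.mp hder).comp hinv).norm
    rw [norm_zero] at hslope
    exact hslope.congr fun m => by
      simp [norm_smul, symmExpProd, reflection_apply, Subtype.dist_eq, dist_eq_norm]
  rw [tendsto_iff_dist_tendsto_zero]
  refine squeeze_zero' (Eventually.of_forall fun _ => dist_nonneg) ?_ hlim
  filter_upwards [eventually_ne_atTop 0] with m hm
  rw [← expUnitary_inv_natCast_smul_pow hm (H + G)]
  exact dist_pow_pow_le _ _ m

/-- A continuous self-map of the unitary group of a C⋆-algebra which fixes `1` and respects the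
reflections `u ↦ v u⁻¹ v` as long as `u` and `v` are at distance less than `δ`. -/
structure IsLocalReflectionHom (ψ : unitary A → unitary A) (δ : ℝ) : Prop where
  pos : 0 < δ
  continuous : Continuous ψ
  map_one : ψ 1 = 1
  map_reflection : ∀ u v, dist u v < δ → ψ (reflection v u) = reflection (ψ v) (ψ u)

/-- `F` generates the image under `ψ` of the one-parameter unitary group `t ↦ exp (itH)`. -/
def IsGenerator (ψ : unitary A → unitary A) (H F : selfAdjoint A) : Prop :=
  ∀ t : ℝ, ψ (expUnitary (t • H)) = expUnitary (t • F)

namespace IsGenerator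

variable {ψ : unitary A → unitary A} {H F F' : selfAdjoint A}

theorem smul (h : IsGenerator ψ H F) (c : ℝ) : IsGenerator ψ (c • H) (c • F) := fun t => by
  rw [smul_smul, smul_smul, h]

theorem unique (h : IsGenerator ψ H F) (h' : IsGenerator ψ H F') : F = F' := by
  have hsmall : ∀ G : selfAdjoint A, ∀ᶠ m : ℕ in atTop, (m : ℝ)⁻¹ • G ∈ Metric.ball 0 Real.pi :=
    fun G => (tendsto_inv_natCast_smul G).eventually (Metric.ball_mem_nhds 0 Real.pi_pos)
  obtain ⟨m, ⟨hF, hF'⟩, hm⟩ :=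
    (((hsmall F).and (hsmall F')).and (eventually_ne_atTop 0)).exists
  exact smul_right_injective _ (inv_ne_zero (Nat.cast_ne_zero.mpr hm))
    (expUnitary_injOn_ball_pi hF hF' ((h _).symm.trans (h' _)))

end IsGenerator

namespace IsLocalReflectionHom

variable {ψ : unitary A → unitary A} {δ : ℝ} {u : unitary A}

theorem map_inv (h : IsLocalReflectionHom ψ δ) (hu : dist u 1 < δ) : ψ u⁻¹ = (ψ u)⁻¹ := by
  simpa [reflection_apply, h.map_one] using h.map_reflection u 1 hu

theorem map_pow (h : IsLocalReflectionHom ψ δ) (hu : dist u 1 < δ) (k : ℕ) :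
    ψ (u ^ k) = ψ u ^ k := by
  induction k using Nat.twoStepInduction with
  | zero => simp [h.map_one]
  | one => simp
  | more k ih ih' =>
    have hrefl : ∀ w : unitary A, w ^ (k + 2) = reflection (w ^ (k + 1)) (w ^ k) := fun w => by
      rw [reflection_apply, pow_succ' w k]; group
    have hdist : dist (u ^ k) (u ^ (k + 1)) < δ := by
      rwa [← dist_mul_left (u ^ k) u 1, mul_one, ← pow_succ, dist_comm] at hu
    rw [hrefl, h.map_reflection _ _ hdist, ih, ih', ← hrefl]

theorem map_expUnitary_nsmul (h : IsLocalReflectionHom ψ δ) {G F : selfAdjoint A}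
    (hG : dist (expUnitary G) 1 < δ) (hF : ψ (expUnitary G) = expUnitary F) (k : ℕ) :
    ψ (expUnitary ((k : ℝ) • G)) = expUnitary ((k : ℝ) • F) := by
  rw [expUnitary_natCast_smul, h.map_pow hG, hF, expUnitary_natCast_smul]

theorem exists_log (h : IsLocalReflectionHom ψ δ) : ∃ r > 0, ∀ G : selfAdjoint A, ‖G‖ < r →
    dist (expUnitary G) 1 < δ ∧ ∃ F : selfAdjoint A, ‖F‖ < 1 ∧ ψ (expUnitary G) = expUnitary F := by
  have hexp : Tendsto (expUnitary : selfAdjoint A → unitary A) (𝓝 0) (𝓝 1) := by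
    simpa using (continuous_expUnitary (A := A)).tendsto 0
  have hψexp : Tendsto (fun G : selfAdjoint A => ψ (expUnitary G)) (𝓝 0) (𝓝 1) := by
    simpa only [h.map_one, Function.comp_def] using (h.continuous.tendsto 1).comp hexp
  have harg : Tendsto (argSelfAdjoint : unitary A → selfAdjoint A) (𝓝 1) (𝓝 0) := by
    have hone : argSelfAdjoint (1 : unitary A) = 0 := by
      simpa using argSelfAdjoint_expUnitary (x := (0 : selfAdjoint A)) (by simpa using Real.pi_pos)
    have hcont : ContinuousAt (argSelfAdjoint : unitary A → selfAdjoint A) 1 :=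
      continuousOn_argSelfAdjoint.continuousAt (Metric.ball_mem_nhds 1 two_pos)
    simpa only [hone] using hcont.tendsto
  have hev := ((hexp.eventually (Metric.ball_mem_nhds 1 h.pos)).and
    (hψexp.eventually (Metric.ball_mem_nhds 1 two_pos))).and
    ((harg.comp hψexp).eventually (Metric.ball_mem_nhds 0 one_pos))
  obtain ⟨r, hr, hball⟩ := Metric.eventually_nhds_iff.mp hev
  refine ⟨r, hr, fun G hG => ?_⟩
  obtain ⟨⟨hδ, htwo⟩, hone⟩ := hball (y := G) (by simpa using hG)
  refine ⟨hδ, argSelfAdjoint (ψ (expUnitary G)), by simpa using hone, ?_⟩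
  exact (expUnitary_argSelfAdjoint (by simpa [Subtype.dist_eq, dist_eq_norm] using htwo)).symm

theorem map_expUnitary_dyadic (h : IsLocalReflectionHom ψ δ) {r : ℝ}
    (hlog : ∀ G : selfAdjoint A, ‖G‖ < r → dist (expUnitary G) 1 < δ ∧
      ∃ F : selfAdjoint A, ‖F‖ < 1 ∧ ψ (expUnitary G) = expUnitary F)
    {G F : selfAdjoint A} (hG : ‖G‖ < r) (hF : ‖F‖ < 1) (hGF : ψ (expUnitary G) = expUnitary F)
    (k : ℕ) : ψ (expUnitary (((2 : ℝ) ^ k)⁻¹ • G)) = expUnitary (((2 : ℝ) ^ k)⁻¹ • F) := by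
  induction k with
  | zero => simpa using hGF
  | succ k ih =>
    have htwo : ∀ E : selfAdjoint A,
        ((2 : ℕ) : ℝ) • ((2 : ℝ) ^ (k + 1))⁻¹ • E = ((2 : ℝ) ^ k)⁻¹ • E := fun E => by
      rw [smul_smul, Nat.cast_two, pow_succ', mul_inv, mul_inv_cancel_left₀ two_ne_zero]
    obtain ⟨hδ, F', hF', hF'exp⟩ := hlog _ ((norm_inv_two_pow_smul_le (k + 1) G).trans_lt hG)
    have hdouble := h.map_expUnitary_nsmul hδ hF'exp 2
    rw [htwo, ih] at hdouble
    have hinj := expUnitary_injOn_ball_pi (x₁ := ((2 : ℝ) ^ k)⁻¹ • F) (x₂ := ((2 : ℕ) : ℝ) • F')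
      (by rw [mem_ball_zero_iff]; linarith [norm_inv_two_pow_smul_le k F, Real.pi_gt_three])
      (by
        rw [mem_ball_zero_iff, norm_smul, Nat.cast_two, Real.norm_two]
        linarith [Real.pi_gt_three]) hdouble
    rw [← htwo] at hinj
    rw [hF'exp, smul_right_injective _ (Nat.cast_ne_zero.mpr two_ne_zero) hinj]

theorem exists_isGenerator_of_small (h : IsLocalReflectionHom ψ δ) :
    ∃ r > 0, ∀ G : selfAdjoint A, ‖G‖ < r → ∃ F, IsGenerator ψ G F := by
  obtain ⟨r, hr, hlog⟩ := h.exists_log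
  have hnonneg : ∀ G F : selfAdjoint A, ‖G‖ < r → ‖F‖ < 1 → ψ (expUnitary G) = expUnitary F →
      ∀ t : ℝ, 0 ≤ t → ψ (expUnitary (t • G)) = expUnitary (t • F) := by
    intro G F hG hF hGF t ht
    have hdense : Tendsto (fun k : ℕ => (⌊t * 2 ^ k⌋₊ : ℝ) / 2 ^ k) atTop (𝓝 t) :=
      (tendsto_nat_floor_mul_div_atTop ht).comp (tendsto_pow_atTop_atTop_of_one_lt one_lt_two)
    refine tendsto_nhds_unique
      (((h.continuous.comp (continuous_expUnitary_smul G)).tendsto t).comp hdense)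
      ((((continuous_expUnitary_smul F).tendsto t).comp hdense).congr fun k => ?_)
    have hsmall : ‖((2 : ℝ) ^ k)⁻¹ • G‖ < r := (norm_inv_two_pow_smul_le k G).trans_lt hG
    have hk := h.map_expUnitary_nsmul (hlog _ hsmall).1 (h.map_expUnitary_dyadic hlog hG hF hGF k)
      ⌊t * 2 ^ k⌋₊
    simpa only [smul_smul, ← div_eq_mul_inv, Function.comp_apply] using hk.symm
  refine ⟨r, hr, fun G hG => ?_⟩
  obtain ⟨hδ, F, hF, hGF⟩ := hlog G hG
  have hneg : ψ (expUnitary (-G)) = expUnitary (-F) := by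
    rw [expUnitary_neg, h.map_inv hδ, hGF, expUnitary_neg]
  refine ⟨F, fun t => (le_total 0 t).elim (hnonneg G F hG hF hGF t) fun ht => ?_⟩
  simpa using hnonneg (-G) (-F) (by rwa [norm_neg]) (by rwa [norm_neg]) hneg (-t) (by linarith)

theorem exists_isGenerator (h : IsLocalReflectionHom ψ δ) (H : selfAdjoint A) :
    ∃ F, IsGenerator ψ H F := by
  obtain ⟨r, hr, hsmall⟩ := h.exists_isGenerator_of_small
  obtain ⟨m, hmr, hm⟩ := (((tendsto_inv_natCast_smul H).eventually
    (Metric.ball_mem_nhds 0 hr)).and (eventually_ne_atTop 0)).exists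
  obtain ⟨F, hF⟩ := hsmall _ (mem_ball_zero_iff.mp hmr)
  have hscaled := hF.smul (m : ℝ)
  rw [smul_inv_smul₀ (Nat.cast_ne_zero.mpr hm)] at hscaled
  exact ⟨_, hscaled⟩

theorem eventually_map_symmExpProd (h : IsLocalReflectionHom ψ δ) {H F G E : selfAdjoint A}
    (hH : IsGenerator ψ H F) (hG : IsGenerator ψ G E) :
    ∀ᶠ t in 𝓝 (0 : ℝ), ψ (symmExpProd H G t) = symmExpProd F E t := by
  have hexp : ∀ E : selfAdjoint A, Tendsto (fun t : ℝ => expUnitary (t • E)) (𝓝 0) (𝓝 1) :=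
    fun E => by simpa using (continuous_expUnitary_smul E).tendsto 0
  have hdist : Tendsto (fun t : ℝ => dist (expUnitary (t • G))⁻¹
      (expUnitary (t • (1 / 2 : ℝ) • H))) (𝓝 0) (𝓝 0) := by
    simpa using (hexp G).inv.dist (hexp ((1 / 2 : ℝ) • H))
  filter_upwards [hdist.eventually_lt_const h.pos,
    (hexp G).eventually (Metric.ball_mem_nhds 1 h.pos)] with t hrefl hinv
  rw [symmExpProd, h.map_reflection _ _ hrefl, h.map_inv hinv, hG, hH.smul, symmExpProd]

theorem isGenerator_add (h : IsLocalReflectionHom ψ δ) {H F G E : selfAdjoint A}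
    (hH : IsGenerator ψ H F) (hG : IsGenerator ψ G E) : IsGenerator ψ (H + G) (F + E) := by
  suffices hone : ∀ {H F G E : selfAdjoint A}, IsGenerator ψ H F → IsGenerator ψ G E →
      ψ (expUnitary (H + G)) = expUnitary (F + E) from fun t => by
    rw [smul_add, smul_add, hone (hH.smul t) (hG.smul t)]
  intro H F G E hH hG
  have hnear : ∀ᶠ t in 𝓝 (0 : ℝ), dist (symmExpProd H G t) 1 < δ := by
    have hlim : Tendsto (symmExpProd H G) (𝓝 0) (𝓝 1) := by
      simpa [symmExpProd, reflection_apply] using (continuous_symmExpProd H G).tendsto 0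
    exact hlim.eventually (Metric.ball_mem_nhds 1 h.pos)
  refine tendsto_nhds_unique_of_eventuallyEq
    ((h.continuous.tendsto _).comp (tendsto_symmExpProd_pow H G)) (tendsto_symmExpProd_pow F E) ?_
  filter_upwards [tendsto_inv_atTop_nhds_zero_nat.eventually
    (hnear.and (h.eventually_map_symmExpProd hH hG))] with m ⟨hm, hmap⟩
  rw [Function.comp_apply, h.map_pow hm, hmap]

theorem exists_linearMap (h : IsLocalReflectionHom ψ δ) :
    ∃ f : selfAdjoint A →ₗ[ℝ] selfAdjoint A, ∀ H, ψ (expUnitary H) = expUnitary (f H) := by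
  choose f hf using h.exists_isGenerator
  exact ⟨{ toFun := f
           map_add' := fun H G => (hf _).unique (h.isGenerator_add (hf H) (hf G))
           map_smul' := fun c H => (hf _).unique ((hf H).smul c) },
    fun H => by simpa using hf H 1⟩

end IsLocalReflectionHom

theorem UnitaryGauge.exists_linearMap_of_isometry [CompactSpace (unitary A)]
    {d : unitary A → unitary A → ℝ} {K : ℝ} (h : UnitaryGauge d K) {ψ : unitary A → unitary A}
    (hψ : ∀ u v, d (ψ u) (ψ v) = d u v) (hone : ψ 1 = 1) :
    ∃ f : selfAdjoint A →ₗ[ℝ] selfAdjoint A, ∀ H, ψ (expUnitary H) = expUnitary (f H) := by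
  obtain ⟨δ, hδ, hrefl⟩ :=
    h.exists_map_reflection (ψ := Equiv.ofBijective ψ (h.bijective_of_isometry hψ)) hψ
  exact IsLocalReflectionHom.exists_linearMap ⟨hδ, h.continuous_of_isometry hψ, hone, hrefl⟩

end Gauge

section Schatten

open selfAdjoint Unitary
open scoped Matrix.Norms.L2Operator

variable {m : Type*} [Fintype m] [DecidableEq m] {p : ℝ}

theorem sum_eigenvalues_eq_sum_roots_charpoly {A : Matrix m m ℂ} (hA : A.IsHermitian)
    (φ : ℝ → ℝ) : ∑ i, φ (hA.eigenvalues i) = (A.charpoly.roots.map fun z => φ z.re).sum := by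
  simp [hA.roots_charpoly_eq_eigenvalues]

/-- The `p`-th power of the unnormalized Schatten `p`-quasinorm. -/
noncomputable def schatten (p : ℝ) (A : Matrix m m ℂ) : ℝ :=
  ∑ i, ((posSemidef_conjTranspose_mul_self A).isHermitian.eigenvalues i) ^ (p / 2)

theorem schatten_nonneg (p : ℝ) (A : Matrix m m ℂ) : 0 ≤ schatten p A :=
  Finset.sum_nonneg fun i _ =>
    Real.rpow_nonneg ((posSemidef_conjTranspose_mul_self A).eigenvalues_nonneg i) _

theorem lpnorm_eq_schatten (p : ℝ) (A : Matrix m m ℂ) :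
    lpnorm p A = (schatten p A / Fintype.card m) ^ (1 / p) := rfl

theorem schatten_eq_of_lpnorm_eq [Nonempty m] (hp : 0 < p) {A B : Matrix m m ℂ}
    (h : lpnorm p A = lpnorm p B) : schatten p A = schatten p B := by
  have hcard : (0 : ℝ) < Fintype.card m := by exact_mod_cast Fintype.card_pos
  rw [lpnorm_eq_schatten, lpnorm_eq_schatten,
    Real.rpow_left_inj (div_nonneg (schatten_nonneg p A) hcard.le)
      (div_nonneg (schatten_nonneg p B) hcard.le) (one_div_pos.mpr hp).ne'] at h
  exact (div_left_inj' hcard.ne').mp h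

theorem schatten_eq_of_charpoly_eq {A B : Matrix m m ℂ}
    (h : (Aᴴ * A).charpoly = (Bᴴ * B).charpoly) : schatten p A = schatten p B := by
  rw [schatten, schatten, (IsHermitian.eigenvalues_eq_eigenvalues_iff
    (posSemidef_conjTranspose_mul_self A).isHermitian
    (posSemidef_conjTranspose_mul_self B).isHermitian).mpr h]

theorem schatten_neg (p : ℝ) (A : Matrix m m ℂ) : schatten p (-A) = schatten p A :=
  schatten_eq_of_charpoly_eq (by rw [conjTranspose_neg, neg_mul_neg])

theorem schatten_conjTranspose (p : ℝ) (A : Matrix m m ℂ) : schatten p Aᴴ = schatten p A :=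
  schatten_eq_of_charpoly_eq (by rw [conjTranspose_conjTranspose, charpoly_mul_comm])

theorem schatten_unitary_mul (p : ℝ) {U : Matrix m m ℂ} (hU : U ∈ unitaryGroup m ℂ)
    (A : Matrix m m ℂ) : schatten p (U * A) = schatten p A :=
  schatten_eq_of_charpoly_eq (by
    rw [conjTranspose_mul, Matrix.mul_assoc, ← Matrix.mul_assoc Uᴴ, ← star_eq_conjTranspose U,
      mem_unitaryGroup_iff'.mp hU, Matrix.one_mul])

theorem schatten_mul_unitary (p : ℝ) {U : Matrix m m ℂ} (hU : U ∈ unitaryGroup m ℂ)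
    (A : Matrix m m ℂ) : schatten p (A * U) = schatten p A := by
  rw [← schatten_conjTranspose, conjTranspose_mul, ← star_eq_conjTranspose U,
    schatten_unitary_mul p (Unitary.star_mem hU), schatten_conjTranspose]

theorem schatten_eq_sum_of_eq_cfc {A H : Matrix m m ℂ} (hH : H.IsHermitian) {f : ℝ → ℝ}
    (h : Aᴴ * A = cfc f H) : schatten p A = ∑ i, f (hH.eigenvalues i) ^ (p / 2) := by
  rw [schatten, sum_eigenvalues_eq_sum_roots_charpoly _ (· ^ (p / 2)), h, hH.charpoly_cfc_eq,
    Polynomial.roots_prod _ _ (Finset.prod_ne_zero_iff.mpr fun i _ => Polynomial.X_sub_C_ne_zero _)]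
  simp

theorem norm_eigenvalues_le {A : Matrix m m ℂ} (hA : A.IsHermitian) (i : m) :
    ‖hA.eigenvalues i‖ ≤ ‖A‖ := by
  have : Nonempty m := ⟨i⟩
  exact spectrum.norm_le_norm_of_mem (hA.eigenvalues_mem_spectrum_real i)

theorem rpow_half_sq {x : ℝ} (hx : 0 ≤ x) (p : ℝ) : (x ^ 2) ^ (p / 2) = x ^ p := by
  rw [← Real.rpow_natCast_mul hx]
  congr 1
  push_cast
  ring

theorem schatten_le (hp : 0 < p) (A : Matrix m m ℂ) :
    schatten p A ≤ Fintype.card m * ‖A‖ ^ p := by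
  have hA := posSemidef_conjTranspose_mul_self A
  have hle : ∀ i, hA.isHermitian.eigenvalues i ^ (p / 2) ≤ ‖A‖ ^ p := fun i => by
    rw [← rpow_half_sq (norm_nonneg A), sq, ← l2_opNorm_conjTranspose_mul_self]
    exact Real.rpow_le_rpow (hA.eigenvalues_nonneg i)
      ((le_abs_self _).trans (norm_eigenvalues_le _ i)) (by positivity)
  simpa [schatten] using Finset.sum_le_card_nsmul Finset.univ _ _ fun i _ => hle i

open scoped MatrixOrder in
theorem norm_rpow_le_schatten (hp : 0 < p) (A : Matrix m m ℂ) : ‖A‖ ^ p ≤ schatten p A := by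
  cases isEmpty_or_nonempty m
  · simp [Subsingleton.elim A 0, Real.zero_rpow hp.ne', schatten]
  have hA := posSemidef_conjTranspose_mul_self A
  have hmem : ‖Aᴴ * A‖ ∈ spectrum ℝ (Aᴴ * A) :=
    CStarAlgebra.norm_mem_spectrum_of_nonneg (ha := hA.nonneg)
  rw [hA.isHermitian.spectrum_real_eq_range_eigenvalues] at hmem
  obtain ⟨i, hi⟩ := hmem
  rw [← rpow_half_sq (norm_nonneg A), sq, ← l2_opNorm_conjTranspose_mul_self, ← hi]
  exact Finset.single_le_sum (f := fun i => hA.isHermitian.eigenvalues i ^ (p / 2))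
    (fun i _ => Real.rpow_nonneg (hA.eigenvalues_nonneg i) _) (Finset.mem_univ i)

theorem sub_mul_sub_eq_of_mul_eq_one {R : Type*} [Ring R] {a b : R} (hab : a * b = 1)
    (hba : b * a = 1) : (a - b) * (b - a) = (b - 1) * (a - 1) * (4 - (b - 1) * (a - 1)) := by
  have hD : (b - 1) * (a - 1) = b * a + 1 - (a + b) := by noncomm_ring
  calc (a - b) * (b - a) = 2 * (a * b + b * a) - (a + b) * (a + b) := by noncomm_ring
    _ = (1 + 1 - (a + b)) * (2 + (a + b)) := by rw [hab, hba, one_add_one_eq_two]; noncomm_ring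
    _ = (b - 1) * (a - 1) * (4 - (b - 1) * (a - 1)) := by rw [hD, hba]; noncomm_ring

theorem star_sub_self_eq_cfc {A : Type*} [CStarAlgebra A] {u : A} (hu : u ∈ unitary A) :
    star (star u - u) * (star u - u) = cfc (fun x : ℝ => x * (4 - x)) (star (u - 1) * (u - 1)) := by
  have hsa : IsSelfAdjoint (star (u - 1) * (u - 1)) := .star_mul_self _
  rw [cfc_mul .., cfc_sub .., cfc_id' .., cfc_const .., map_ofNat, star_sub, star_sub, star_star,
    star_one, sub_mul_sub_eq_of_mul_eq_one (Unitary.mul_star_self_of_mem hu)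
      (Unitary.star_mul_self_of_mem hu)]

theorem mul_schatten_sub_one_le (hp : 0 < p) {U : Matrix m m ℂ} (hU : U ∈ unitaryGroup m ℂ)
    (hnorm : ‖U - 1‖ ≤ 1) : 3 ^ (p / 2) * schatten p (U - 1) ≤ schatten p (star U - U) := by
  have hD := posSemidef_conjTranspose_mul_self (U - 1)
  rw [schatten_eq_sum_of_eq_cfc hD.isHermitian (star_sub_self_eq_cfc hU), schatten, Finset.mul_sum]
  refine Finset.sum_le_sum fun i _ => ?_
  have hnonneg : 0 ≤ hD.isHermitian.eigenvalues i := hD.eigenvalues_nonneg i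
  have hle : hD.isHermitian.eigenvalues i ≤ 1 := by
    refine (le_abs_self _).trans ((norm_eigenvalues_le hD.isHermitian i).trans ?_)
    rw [l2_opNorm_conjTranspose_mul_self]
    exact mul_le_one₀ hnorm (norm_nonneg _) hnorm
  rw [← Real.mul_rpow (by norm_num) hnonneg]
  exact Real.rpow_le_rpow (by positivity) (by nlinarith) (by positivity)

theorem mul_schatten_sub_le (hp : 0 < p) {u v : unitary (Matrix m m ℂ)} (huv : dist u v ≤ 1) :
    3 ^ (p / 2) * schatten p (u.1 - v.1) ≤ schatten p ((v * u⁻¹ * v).1 - u.1) := by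
  obtain ⟨w, rfl⟩ : ∃ w, u = v * w := ⟨v⁻¹ * u, (mul_inv_cancel_left v u).symm⟩
  have hsub : (v * w).1 - v.1 = v.1 * (w.1 - 1) := by rw [Submonoid.coe_mul, mul_sub, mul_one]
  have hrefl : (v * (v * w)⁻¹ * v).1 - (v * w).1 = v.1 * (star w.1 - w.1) := by
    rw [show v * (v * w)⁻¹ * v = v * w⁻¹ by group, mul_sub]
    rfl
  rw [Subtype.dist_eq, dist_eq_norm, hsub, CStarRing.norm_coe_unitary_mul] at huv
  rw [hsub, hrefl, schatten_unitary_mul p v.2, schatten_unitary_mul p v.2]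
  exact mul_schatten_sub_one_le hp w.2 huv

theorem norm_le_one_of_mem_unitary {A : Type*} [NormedRing A] [StarRing A] [CStarRing A] {u : A}
    (hu : u ∈ unitary A) : ‖u‖ ≤ 1 := by
  nontriviality A
  exact (CStarRing.norm_of_mem_unitary hu).le

theorem unitaryGauge_schatten (hp : 0 < p) :
    UnitaryGauge (fun u v : unitary (Matrix m m ℂ) => schatten p (u.1 - v.1))
      (3 ^ (p / 2)) where
  nonneg u v := schatten_nonneg p _
  bounded := by
    refine ⟨Fintype.card m * 2 ^ p, fun u v => (schatten_le hp _).trans ?_⟩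
    have : ‖u.1 - v.1‖ ≤ 2 :=
      (norm_sub_le _ _).trans
        (by linarith [norm_le_one_of_mem_unitary u.2, norm_le_one_of_mem_unitary v.2])
    gcongr
  mul_left w u v := by
    simp only [Submonoid.coe_mul, ← mul_sub]
    exact schatten_unitary_mul p w.2 _
  mul_right w u v := by
    simp only [Submonoid.coe_mul, ← sub_mul]
    exact schatten_mul_unitary p w.2 _
  inv u v := by
    rw [← schatten_conjTranspose, conjTranspose_sub]
    simp [← star_eq_conjTranspose]
  small_of_dist ε hε := by
    have hcont : Filter.Tendsto (fun x : ℝ => Fintype.card m * x ^ p) (nhds 0) (nhds 0) := by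
      simpa [Real.zero_rpow hp.ne'] using
        ((Real.continuous_rpow_const hp.le).const_mul (Fintype.card m : ℝ)).tendsto 0
    obtain ⟨δ, hδ, hlt⟩ := Metric.eventually_nhds_iff.mp (hcont.eventually_lt_const hε)
    refine ⟨δ, hδ, fun u v huv => (schatten_le hp _).trans_lt (hlt ?_)⟩
    rwa [Real.dist_0_eq_abs, abs_norm, ← dist_eq_norm]
  dist_of_small ε hε := by
    refine ⟨ε ^ p, by positivity, fun u v huv => ?_⟩
    rw [Subtype.dist_eq, dist_eq_norm]
    exact (Real.rpow_lt_rpow_iff (norm_nonneg _) hε.le hp).mp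
      ((norm_rpow_le_schatten hp _).trans_lt huv)
  one_lt := Real.one_lt_rpow (by norm_num) (by positivity)
  expanding u v huv := mul_schatten_sub_le hp huv

instance : CompactSpace (unitary (Matrix m m ℂ)) := by
  have : ProperSpace (Matrix m m ℂ) := FiniteDimensional.proper ℂ _
  refine isCompact_iff_compactSpace.mp (Metric.isCompact_of_isClosed_isBounded isClosed_unitary ?_)
  exact (Metric.isBounded_closedBall (x := 0) (r := 1)).subset fun u hu =>
    mem_closedBall_zero_iff.mpr (norm_le_one_of_mem_unitary hu)

theorem schatten_eq_sum_sq_eigenvalues (p : ℝ) {H : Matrix m m ℂ} (hH : H.IsHermitian) :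
    schatten p H = ∑ i, (hH.eigenvalues i ^ 2) ^ (p / 2) := by
  have hsa : IsSelfAdjoint H := hH
  refine schatten_eq_sum_of_eq_cfc hH (f := fun x => x ^ 2) ?_
  rw [hH.eq, cfc_pow .., cfc_id' .., sq]

theorem one_sub_expUnitary_smul_eq_cfc {A : Type*} [CStarAlgebra A] (t : ℝ) (H : selfAdjoint A) :
    1 - (expUnitary (t • H) : A) =
      cfc (fun z : ℂ => 1 - Complex.exp ((t : ℂ) * z * Complex.I)) (H : A) := by
  have hsmul : Complex.I • ((t • H : selfAdjoint A) : A) = (t * Complex.I : ℂ) • (H : A) := by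
    rw [selfAdjoint.val_smul, ← Complex.coe_smul, smul_smul, mul_comm]
  rw [expUnitary_coe, hsmul, ← CFC.exp_eq_normedSpace_exp (𝕜 := ℂ),
    ← cfc_comp_smul (t * Complex.I : ℂ) _ (H : A), cfc_sub .., cfc_const_one ..]
  simp only [smul_eq_mul, Complex.exp_eq_exp_ℂ, mul_right_comm _ Complex.I]

theorem schatten_one_sub_expUnitary_smul (p t : ℝ) {H : selfAdjoint (Matrix m m ℂ)}
    (hH : (H : Matrix m m ℂ).IsHermitian) :
    schatten p (1 - (expUnitary (t • H) : Matrix m m ℂ)) =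
      ∑ i, (2 - 2 * Real.cos (t * hH.eigenvalues i)) ^ (p / 2) := by
  have hsa : IsSelfAdjoint (H : Matrix m m ℂ) := H.2
  refine schatten_eq_sum_of_eq_cfc hH (f := fun x => 2 - 2 * Real.cos (t * x)) ?_
  rw [one_sub_expUnitary_smul_eq_cfc, ← star_eq_conjTranspose, ← cfc_star, ← cfc_mul ..,
    cfc_real_eq_complex (ha := hsa)]
  refine cfc_congr fun z hz => ?_
  obtain ⟨x, rfl⟩ : ∃ x : ℝ, z = x := ⟨z.re, hsa.mem_spectrum_eq_re hz⟩
  simp only [Complex.star_def, ← Complex.normSq_eq_conj_mul_self, Complex.ofReal_re,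
    ← Complex.ofReal_mul t x]
  rw [Complex.normSq_apply, Complex.sub_re, Complex.sub_im, Complex.exp_ofReal_mul_I_re,
    Complex.exp_ofReal_mul_I_im, Complex.one_re, Complex.one_im]
  norm_cast
  nlinarith [Real.sin_sq_add_cos_sq (t * x)]

end Schatten

section Hermitian

variable {m : Type*}

/-- The real vector space of complex Hermitian matrices, which carries the generators of the
one-parameter groups of unitary matrices. -/
abbrev HermitianMatrix (m : Type*) := selfAdjoint (Matrix m m ℂ)

/-- The rank-one Hermitian matrix `x xᴴ`; for a unit vector it is the projection onto `ℂ x`. -/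
def rankOne (x : m → ℂ) : HermitianMatrix m :=
  ⟨vecMulVec x (star x), by
    rw [selfAdjoint.mem_iff, star_eq_conjTranspose, conjTranspose_vecMulVec, star_star]⟩

/-- Transposition as a real-linear map of Hermitian matrices. -/
def hermitianTranspose (m : Type*) : HermitianMatrix m →ₗ[ℝ] HermitianMatrix m where
  toFun H := ⟨H.1ᵀ, IsHermitian.transpose H.2⟩
  map_add' _ _ := rfl
  map_smul' _ _ := rfl

/-- The congruence `H ↦ V H Vᴴ` as a real-linear map of Hermitian matrices. -/
def congruence [Fintype m] (V : Matrix m m ℂ) : HermitianMatrix m →ₗ[ℝ] HermitianMatrix m where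
  toFun H := ⟨V * H.1 * Vᴴ, isHermitian_mul_mul_conjTranspose V H.2⟩
  map_add' H K := by ext1; simp [Matrix.mul_add, Matrix.add_mul]
  map_smul' c H := by ext1; simp

theorem HermitianMatrix.isHermitian (H : HermitianMatrix m) : H.1.IsHermitian := H.2

theorem hermitian_apply_swap (H : HermitianMatrix m) (i j : m) : H.1 j i = star (H.1 i j) :=
  (IsHermitian.apply H.2 j i).symm

theorem rankOne_apply (x : m → ℂ) (i j : m) : (rankOne x).1 i j = x i * star (x j) := rfl

theorem rankOne_smul (c : ℂ) (x : m → ℂ) : rankOne (c • x) = (‖c‖ ^ 2) • rankOne x := by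
  ext i j
  have hc : c * star c = ((‖c‖ ^ 2 : ℝ) : ℂ) := by
    rw [Complex.star_def, Complex.mul_conj, Complex.normSq_eq_norm_sq]
  simp only [rankOne_apply, selfAdjoint.val_smul, Matrix.smul_apply, Pi.smul_apply, smul_eq_mul,
    Complex.real_smul, ← hc, star_mul']
  ring

theorem rankOne_zero : rankOne (0 : m → ℂ) = 0 := by
  ext
  simp [rankOne_apply]

theorem rankOne_apply_mul_apply (x : m → ℂ) (i j k : m) :
    (rankOne x).1 i j * (rankOne x).1 j k = (rankOne x).1 j j * (rankOne x).1 i k := by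
  simp only [rankOne_apply]
  ring

variable [Fintype m]

theorem trace_rankOne (x : m → ℂ) : trace (rankOne x).1 = star x ⬝ᵥ x := by
  rw [rankOne, trace_vecMulVec, dotProduct_comm]

theorem rankOne_mul_rankOne_mul_rankOne (x y : m → ℂ) :
    (rankOne x).1 * (rankOne y).1 * (rankOne x).1 = (‖star x ⬝ᵥ y‖ ^ 2) • (rankOne x).1 := by
  have h : star y ⬝ᵥ x = star (star x ⬝ᵥ y) := star_dotProduct y x
  rw [rankOne, rankOne, vecMulVec_mul_vecMulVec, vecMulVec_mul_vecMulVec, smul_dotProduct, h,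
    smul_eq_mul, Complex.star_def, Complex.mul_conj, Complex.normSq_eq_norm_sq, vecMulVec_smul,
    Complex.coe_smul]

theorem rankOne_mul_self {x : m → ℂ} (hx : star x ⬝ᵥ x = 1) :
    (rankOne x).1 * (rankOne x).1 = (rankOne x).1 := by
  rw [rankOne, vecMulVec_mul_vecMulVec, hx, one_smul]

theorem trace_rankOne_mul_rankOne (x y : m → ℂ) :
    trace ((rankOne x).1 * (rankOne y).1) = ((‖star x ⬝ᵥ y‖ ^ 2 : ℝ) : ℂ) := by
  have h : star y ⬝ᵥ x = star (star x ⬝ᵥ y) := star_dotProduct y x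
  rw [rankOne, rankOne, vecMulVec_mul_vecMulVec, trace_vecMulVec, dotProduct_smul,
    dotProduct_comm x, h, smul_eq_mul, Complex.star_def, Complex.mul_conj,
    Complex.normSq_eq_norm_sq]

theorem congruence_rankOne (V : Matrix m m ℂ) (x : m → ℂ) :
    congruence V (rankOne x) = rankOne (V *ᵥ x) := by
  ext1
  change V * vecMulVec x (star x) * Vᴴ = vecMulVec _ _
  rw [mul_vecMulVec, vecMulVec_mul, star_mulVec]

theorem star_dotProduct_self_eq_norm_sq (x : m → ℂ) :
    star x ⬝ᵥ x = ((‖WithLp.toLp 2 x‖ ^ 2 : ℝ) : ℂ) := by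
  rw [dotProduct_comm, ← EuclideanSpace.inner_toLp_toLp, inner_self_eq_norm_sq_to_K]
  exact (Complex.ofReal_pow _ _).symm

theorem norm_toLp_eq_one_iff {x : m → ℂ} : ‖WithLp.toLp 2 x‖ = 1 ↔ star x ⬝ᵥ x = 1 := by
  rw [star_dotProduct_self_eq_norm_sq, Complex.ofReal_eq_one,
    pow_eq_one_iff_of_nonneg (norm_nonneg _) two_ne_zero]

theorem exists_eq_smul_unit {x : m → ℂ} (hx : x ≠ 0) :
    ∃ (c : ℂ) (u : m → ℂ), star u ⬝ᵥ u = 1 ∧ x = c • u := by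
  have hx' : WithLp.toLp 2 x ≠ 0 := by simpa using hx
  have hc : (‖WithLp.toLp 2 x‖ : ℂ) ≠ 0 := by exact_mod_cast norm_ne_zero_iff.mpr hx'
  refine ⟨_, (‖WithLp.toLp 2 x‖ : ℂ)⁻¹ • x, norm_toLp_eq_one_iff.mp ?_, (smul_inv_smul₀ hc x).symm⟩
  exact norm_smul_inv_norm (𝕜 := ℂ) hx'

theorem norm_star_dotProduct_sq_le_one {x y : m → ℂ} (hx : star x ⬝ᵥ x = 1)
    (hy : star y ⬝ᵥ y = 1) : ‖star x ⬝ᵥ y‖ ^ 2 ≤ 1 := by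
  have h := norm_inner_le_norm (𝕜 := ℂ) (WithLp.toLp 2 x) (WithLp.toLp 2 y)
  rw [norm_toLp_eq_one_iff.mpr hx, norm_toLp_eq_one_iff.mpr hy, one_mul,
    EuclideanSpace.inner_toLp_toLp, dotProduct_comm] at h
  exact pow_le_one₀ (norm_nonneg _) h

theorem rankOne_sub_rankOne_cube {x y : m → ℂ} (hx : star x ⬝ᵥ x = 1) (hy : star y ⬝ᵥ y = 1) :
    (rankOne x - rankOne y).1 * (rankOne x - rankOne y).1 * (rankOne x - rankOne y).1 =
      (1 - ‖star x ⬝ᵥ y‖ ^ 2) • (rankOne x - rankOne y).1 := by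
  have hxyx := rankOne_mul_rankOne_mul_rankOne x y
  have hyxy := rankOne_mul_rankOne_mul_rankOne y x
  rw [star_dotProduct, norm_star] at hyxy
  have hexp : ∀ P Q : Matrix m m ℂ, (P - Q) * (P - Q) * (P - Q) = P * P * P - P * P * Q -
      P * Q * P + P * (Q * Q) - Q * (P * P) + Q * P * Q + Q * Q * P - Q * Q * Q := fun P Q => by
    simp only [sub_mul, mul_sub, mul_assoc]
    abel
  rw [AddSubgroup.coe_sub, hexp, rankOne_mul_self hx, rankOne_mul_self hy, hxyx, hyxy,
    rankOne_mul_self hx, rankOne_mul_self hy, smul_sub, sub_smul, sub_smul, one_smul, one_smul]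
  abel

theorem trace_rankOne_sub_rankOne_mul_self {x y : m → ℂ} (hx : star x ⬝ᵥ x = 1)
    (hy : star y ⬝ᵥ y = 1) :
    trace ((rankOne x - rankOne y).1 * (rankOne x - rankOne y).1) =
      ((2 * (1 - ‖star x ⬝ᵥ y‖ ^ 2) : ℝ) : ℂ) := by
  rw [AddSubgroup.coe_sub, sub_mul, mul_sub, mul_sub, rankOne_mul_self hx, rankOne_mul_self hy,
    trace_sub, trace_sub, trace_sub, trace_rankOne, trace_rankOne, hx, hy,
    trace_mul_comm (rankOne y).1, trace_rankOne_mul_rankOne]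
  push_cast
  ring

variable [DecidableEq m]

theorem trace_congruence_mul_congruence {V : Matrix m m ℂ} (hV : V ∈ unitaryGroup m ℂ)
    (H K : HermitianMatrix m) :
    trace ((congruence V H).1 * (congruence V K).1) = trace (H.1 * K.1) := by
  have hVV : Vᴴ * V = 1 := mem_unitaryGroup_iff'.mp hV
  calc trace (V * H.1 * Vᴴ * (V * K.1 * Vᴴ))
      = trace (V * (H.1 * (Vᴴ * V) * K.1 * Vᴴ)) := by simp only [Matrix.mul_assoc]
    _ = trace (H.1 * K.1) := by
      rw [trace_mul_comm, hVV, Matrix.mul_one, Matrix.mul_assoc, hVV, Matrix.mul_one]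

theorem congruence_comp_congruence_conjTranspose {V : Matrix m m ℂ} (hV : V ∈ unitaryGroup m ℂ) :
    congruence V ∘ₗ congruence Vᴴ = LinearMap.id := by
  have hVV : V * Vᴴ = 1 := mem_unitaryGroup_iff.mp hV
  ext1 H
  ext1
  change V * (Vᴴ * H.1 * Vᴴᴴ) * Vᴴ = H.1
  calc V * (Vᴴ * H.1 * Vᴴᴴ) * Vᴴ = V * Vᴴ * H.1 * (V * Vᴴ) := by
        simp only [conjTranspose_conjTranspose, Matrix.mul_assoc]
    _ = H.1 := by rw [hVV, Matrix.one_mul, Matrix.mul_one]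

theorem exists_eq_sum_eigenvalues_smul_rankOne {H : HermitianMatrix m} (hH : H.1.IsHermitian) :
    ∃ v : m → m → ℂ, (∀ j, star (v j) ⬝ᵥ v j = 1) ∧
      H = ∑ j, hH.eigenvalues j • rankOne (v j) := by
  let Q : Matrix m m ℂ := hH.eigenvectorUnitary
  refine ⟨fun j i => Q i j, fun j => ?_, ?_⟩
  · have := congrFun₂ (mem_unitaryGroup_iff'.mp hH.eigenvectorUnitary.2) j j
    rwa [one_apply_eq] at this
  · ext a b
    have hQ : H.1 = Q * diagonal (RCLike.ofReal ∘ hH.eigenvalues) * star Q := hH.spectral_theorem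
    rw [congrFun₂ hQ a b, AddSubgroup.val_finsetSum, Matrix.sum_apply, Matrix.mul_apply]
    refine Finset.sum_congr rfl fun i _ => ?_
    rw [mul_diagonal, selfAdjoint.val_smul, Matrix.smul_apply, rankOne_apply, star_apply,
      Function.comp_apply, Complex.real_smul]
    exact (congrArg (· * star (Q b i)) (mul_comm (Q a i) _)).trans (mul_assoc _ _ _)

end Hermitian

section Wigner

variable {m : Type*}

/-- The map `g` of Hermitian matrices acts on the `(i, j)` entry by complex conjugation. -/
def ConjugatesEntry (g : HermitianMatrix m →ₗ[ℝ] HermitianMatrix m) (i j : m) : Prop :=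
  ∀ H, (g H).1 i j = star (H.1 i j)

theorem ConjugatesEntry.symm {g : HermitianMatrix m →ₗ[ℝ] HermitianMatrix m} {i j : m}
    (h : ConjugatesEntry g i j) : ConjugatesEntry g j i :=
  fun H => by rw [hermitian_apply_swap, h, ← hermitian_apply_swap]

/-- A real-linear map of Hermitian matrices which preserves the trace form and maps each `x xᴴ` to
some `y yᴴ`: the linear form of a Wigner symmetry. -/
structure WignerSymmetry [Fintype m] (g : HermitianMatrix m →ₗ[ℝ] HermitianMatrix m) : Prop where
  trace_mul : ∀ H K, trace ((g H).1 * (g K).1) = trace (H.1 * K.1)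
  exists_map_rankOne : ∀ x, ∃ y, g (rankOne x) = rankOne y

theorem WignerSymmetry.norm_dotProduct_eq [Fintype m]
    {g : HermitianMatrix m →ₗ[ℝ] HermitianMatrix m} (h : WignerSymmetry g)
    {x y x' y' : m → ℂ} (hx : g (rankOne x) = rankOne x') (hy : g (rankOne y) = rankOne y') :
    ‖star x' ⬝ᵥ y'‖ = ‖star x ⬝ᵥ y‖ := by
  have htrace := h.trace_mul (rankOne x) (rankOne y)
  rw [hx, hy, trace_rankOne_mul_rankOne, trace_rankOne_mul_rankOne] at htrace
  exact (sq_eq_sq₀ (norm_nonneg _) (norm_nonneg _)).mp (Complex.ofReal_injective htrace)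

theorem WignerSymmetry.of_unit [Fintype m] {g : HermitianMatrix m →ₗ[ℝ] HermitianMatrix m}
    (hunit : ∀ x : m → ℂ, star x ⬝ᵥ x = 1 → ∃ y, g (rankOne x) = rankOne y)
    (htrace : ∀ x y : m → ℂ, star x ⬝ᵥ x = 1 → star y ⬝ᵥ y = 1 →
      trace ((g (rankOne x)).1 * (g (rankOne y)).1) =
        trace ((rankOne x).1 * (rankOne y).1)) : WignerSymmetry g where
  trace_mul H K := by
    classical
    obtain ⟨v, hv, hH⟩ := exists_eq_sum_eigenvalues_smul_rankOne (HermitianMatrix.isHermitian H)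
    obtain ⟨w, hw, hK⟩ := exists_eq_sum_eigenvalues_smul_rankOne (HermitianMatrix.isHermitian K)
    rw [hH, hK]
    simp only [map_sum, map_smul, AddSubgroup.val_finsetSum, selfAdjoint.val_smul, Finset.sum_mul,
      Finset.mul_sum, trace_sum, smul_mul_assoc, mul_smul_comm, trace_smul,
      htrace _ _ (hv _) (hw _)]
  exists_map_rankOne x := by
    rcases eq_or_ne x 0 with rfl | hx
    · exact ⟨0, by rw [rankOne_zero, map_zero]⟩
    obtain ⟨c, u, hu, rfl⟩ := exists_eq_smul_unit hx
    obtain ⟨y, hy⟩ := hunit u hu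
    exact ⟨c • y, by rw [rankOne_smul, rankOne_smul, map_smul, hy]⟩

variable [DecidableEq m]

/-- The Hermitian matrix `z Eᵢⱼ + z̄ Eⱼᵢ`; pairing with it under the trace form reads off the
entry `(i, j)`. -/
def hermitianSingle (i j : m) (z : ℂ) : HermitianMatrix m :=
  ⟨single i j z + single j i (star z), by
    rw [selfAdjoint.mem_iff, star_eq_conjTranspose, conjTranspose_add, conjTranspose_single,
      conjTranspose_single, star_star, add_comm]⟩

theorem rankOne_pi_single (k : m) : (rankOne (Pi.single k 1)).1 = single k k 1 := by
  ext i j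
  rw [rankOne_apply]
  by_cases hi : k = i <;> by_cases hj : k = j <;>
    simp [single_apply, hi, hj, Pi.single_apply, eq_comm]

theorem rankOne_single_add_single {i j : m} (hij : i ≠ j) (a b : ℂ) :
    rankOne (Pi.single i a + Pi.single j b) = (‖a‖ ^ 2) • rankOne (Pi.single i 1) +
      (‖b‖ ^ 2) • rankOne (Pi.single j 1) + hermitianSingle i j (a * star b) := by
  rw [← rankOne_smul, ← rankOne_smul]
  ext k l
  simp only [rankOne_apply, AddSubgroup.coe_add, Matrix.add_apply, hermitianSingle, Pi.add_apply,
    Pi.smul_apply, smul_eq_mul, Pi.single_apply, single_apply]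
  by_cases hki : k = i <;> by_cases hkj : k = j <;> by_cases hli : l = i <;>
    by_cases hlj : l = j <;> simp_all [eq_comm, mul_comm]

theorem hermitianSingle_apply {i j : m} (hij : i ≠ j) (z : ℂ) :
    (hermitianSingle i j z).1 i j = z := by
  simp [hermitianSingle, hij, hij.symm]

variable [Fintype m]

theorem trace_mul_rankOne_single (H : HermitianMatrix m) (k : m) :
    trace (H.1 * (rankOne (Pi.single k 1)).1) = H.1 k k := by
  rw [rankOne_pi_single, trace_mul_single, MulOpposite.op_one, one_smul]

theorem trace_mul_hermitianSingle (H : HermitianMatrix m) (i j : m) (z : ℂ) :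
    trace (H.1 * (hermitianSingle i j z).1) = ((2 * (star (H.1 i j) * z).re : ℝ) : ℂ) := by
  simp only [hermitianSingle, Matrix.mul_add, trace_add, trace_mul_single,
    hermitian_apply_swap H i j]
  apply Complex.ext <;> simp <;> ring

/-- A Wigner symmetry normalized to fix the diagonal matrix units and the all-ones matrix. -/
structure NormalizedWignerSymmetry (g : HermitianMatrix m →ₗ[ℝ] HermitianMatrix m) : Prop
    extends WignerSymmetry g where
  diag : ∀ k, g (rankOne (Pi.single k 1)) = rankOne (Pi.single k 1)
  ones : g (rankOne 1) = rankOne 1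

variable {g : HermitianMatrix m →ₗ[ℝ] HermitianMatrix m}

namespace NormalizedWignerSymmetry

theorem apply_self (h : NormalizedWignerSymmetry g) (H : HermitianMatrix m) (k : m) :
    (g H).1 k k = H.1 k k := by
  rw [← trace_mul_rankOne_single, ← trace_mul_rankOne_single H, ← h.trace_mul H, h.diag]

theorem norm_apply (h : NormalizedWignerSymmetry g) {x y : m → ℂ}
    (hxy : g (rankOne x) = rankOne y) (k : m) : ‖y k‖ = ‖x k‖ := by
  have hk := congrArg norm (h.apply_self (rankOne x) k)
  rwa [hxy, rankOne_apply, rankOne_apply, norm_mul, norm_mul, norm_star, norm_star,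
    mul_self_inj (norm_nonneg _) (norm_nonneg _)] at hk

theorem exists_map_hermitianSingle (h : NormalizedWignerSymmetry g) {i j : m} (hij : i ≠ j) {z : ℂ}
    (hz : ‖z‖ = 1) : ∃ w : ℂ, ‖w‖ = 1 ∧ g (hermitianSingle i j z) = hermitianSingle i j w := by
  obtain ⟨y, hy⟩ := h.exists_map_rankOne (Pi.single i 1 + Pi.single j (star z))
  have hnorm := h.norm_apply hy
  have hi : ‖y i‖ = 1 := by rw [hnorm]; simp [hij]
  have hj : ‖y j‖ = 1 := by rw [hnorm]; simp [hij.symm, hz]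
  have hsupp : y = Pi.single i (y i) + Pi.single j (y j) := by
    ext k
    by_cases hki : k = i
    · subst hki; simp [hij]
    by_cases hkj : k = j
    · subst hkj; simp [hij.symm]
    have : ‖y k‖ = 0 := by rw [hnorm]; simp [hki, hkj]
    simp [hki, hkj, norm_eq_zero.mp this]
  refine ⟨y i * star (y j), by rw [norm_mul, norm_star, hi, hj, one_mul], ?_⟩
  rw [hsupp, rankOne_single_add_single hij, rankOne_single_add_single hij] at hy
  simp only [hi, hj, hz, norm_star, norm_one, one_pow, one_smul, star_star, one_mul, map_add,
    h.diag] at hy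
  exact add_left_cancel hy

theorem re_star_apply_mul (h : NormalizedWignerSymmetry g) {i j : m} {z w : ℂ}
    (hzw : g (hermitianSingle i j z) = hermitianSingle i j w) (H : HermitianMatrix m) :
    (star ((g H).1 i j) * w).re = (star (H.1 i j) * z).re := by
  have htrace := h.trace_mul H (hermitianSingle i j z)
  rw [hzw, trace_mul_hermitianSingle, trace_mul_hermitianSingle] at htrace
  exact mul_left_cancel₀ two_ne_zero (Complex.ofReal_injective htrace)

theorem map_hermitianSingle_one (h : NormalizedWignerSymmetry g) {i j : m} (hij : i ≠ j) :
    g (hermitianSingle i j 1) = hermitianSingle i j 1 := by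
  obtain ⟨w, hw, hgw⟩ := h.exists_map_hermitianSingle hij norm_one
  have hre : w.re = 1 := by
    simpa [h.ones, rankOne_apply] using h.re_star_apply_mul hgw (rankOne 1)
  have h1 : 1 = w :=
    (inner_eq_one_iff_of_norm_eq_one (𝕜 := ℝ) norm_one hw).mp (by simpa [Complex.inner] using hre)
  rw [hgw, ← h1]

theorem apply_eq_or_conjugatesEntry (h : NormalizedWignerSymmetry g) (i j : m) :
    (∀ H, (g H).1 i j = H.1 i j) ∨ ConjugatesEntry g i j := by
  rcases eq_or_ne i j with rfl | hij
  · exact Or.inl fun H => h.apply_self H i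
  have hre : ∀ H, ((g H).1 i j).re = (H.1 i j).re := fun H => by
    simpa using h.re_star_apply_mul (h.map_hermitianSingle_one hij) H
  obtain ⟨w, hw, hgw⟩ := h.exists_map_hermitianSingle hij Complex.norm_I
  have hw_re : w.re = 0 := by
    simpa [hgw, hermitianSingle_apply hij] using hre (hermitianSingle i j Complex.I)
  have hw_im : w.im ^ 2 = 1 := by
    simpa [hw, Complex.normSq_apply, hw_re, sq] using (Complex.sq_norm w).symm
  have him : ∀ H, ((g H).1 i j).im * w.im = (H.1 i j).im := fun H => by
    simpa [hw_re] using h.re_star_apply_mul hgw H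
  rcases sq_eq_one_iff.mp hw_im with hw1 | hw1
  · exact Or.inl fun H => Complex.ext (hre H) (by simpa [hw1] using him H)
  · exact Or.inr fun H => Complex.ext (hre H) (by simpa [hw1, neg_eq_iff_eq_neg] using him H)

theorem conjugatesEntry_of_column (h : NormalizedWignerSymmetry g) {i j k : m} (hik : i ≠ k)
    (hjk : j ≠ k) (hj : ConjugatesEntry g j k) : ConjugatesEntry g i k := by
  refine (h.apply_eq_or_conjugatesEntry i k).resolve_left fun hi => ?_
  -- Test on `x xᴴ` with all entries of `x` equal to `1` except `xₖ = I`: the products of entries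
  -- along `i → j → k` and `i → k` agree for `x xᴴ` and for its image, yet differ by conjugation.
  obtain ⟨y, hy⟩ := h.exists_map_rankOne (Function.update 1 k Complex.I)
  have hij : (rankOne y).1 i j = 1 := by
    rw [← hy]
    rcases h.apply_eq_or_conjugatesEntry i j with h' | h' <;>
      simp [h' _, rankOne_apply, hik, hjk]
  have hjj : (rankOne y).1 j j = 1 := by
    rw [← hy, h.apply_self]
    simp [rankOne_apply, hjk]
  have hcycle := rankOne_apply_mul_apply y i j k
  rw [hij, hjj, ← hy, hi, hj] at hcycle
  have := congrArg Complex.im hcycle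
  norm_num [rankOne_apply, hik, hjk] at this

theorem conjugatesEntry_of_exists (h : NormalizedWignerSymmetry g) {a b : m} (hab : a ≠ b)
    (hconj : ConjugatesEntry g a b) {i j : m} (hij : i ≠ j) : ConjugatesEntry g i j := by
  rcases eq_or_ne i b with rfl | hib
  · exact (h.conjugatesEntry_of_column hij.symm hab hconj).symm
  · have hbi : ConjugatesEntry g b i := (h.conjugatesEntry_of_column hib hab hconj).symm
    exact (h.conjugatesEntry_of_column hij.symm hib.symm hbi).symm

theorem eq_id_or_hermitianTranspose (h : NormalizedWignerSymmetry g) :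
    g = LinearMap.id ∨ g = hermitianTranspose m := by
  by_cases hconj : ∃ a b, a ≠ b ∧ ConjugatesEntry g a b
  · obtain ⟨a, b, hab, hconj⟩ := hconj
    right
    ext H i j
    change (g H).1 i j = H.1 j i
    rcases eq_or_ne i j with rfl | hij
    · exact h.apply_self H i
    · rw [h.conjugatesEntry_of_exists hab hconj hij, ← hermitian_apply_swap]
  · left
    ext H i j
    rcases eq_or_ne i j with rfl | hij
    · exact h.apply_self H i
    · exact (h.apply_eq_or_conjugatesEntry i j).resolve_right (fun hc => hconj ⟨i, j, hij, hc⟩) H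

end NormalizedWignerSymmetry

namespace WignerSymmetry

theorem congruence_comp (h : WignerSymmetry g) {V : Matrix m m ℂ} (hV : V ∈ unitaryGroup m ℂ) :
    WignerSymmetry (congruence V ∘ₗ g) where
  trace_mul H K := (trace_congruence_mul_congruence hV _ _).trans (h.trace_mul H K)
  exists_map_rankOne x := by
    obtain ⟨y, hy⟩ := h.exists_map_rankOne x
    exact ⟨V *ᵥ y, by rw [LinearMap.comp_apply, hy, congruence_rankOne]⟩

theorem exists_orthonormal_images (h : WignerSymmetry g) {w : m → ℂ}
    (hw : g (rankOne 1) = rankOne w) : ∃ q : m → m → ℂ,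
      (∀ k, g (rankOne (Pi.single k 1)) = rankOne (q k)) ∧
      (∀ k l, star (q k) ⬝ᵥ q l = if k = l then 1 else 0) ∧ ∀ k, star (q k) ⬝ᵥ w = 1 := by
  choose y hy using fun k => h.exists_map_rankOne (Pi.single k 1)
  have hyw : ∀ k, ‖star (y k) ⬝ᵥ w‖ = 1 := fun k => by
    rw [h.norm_dotProduct_eq (hy k) hw, ← Pi.single_star]
    simp
  have hyy : ∀ k l, star (y k) ⬝ᵥ y l = if k = l then 1 else 0 := fun k l => by
    have hnorm := h.norm_dotProduct_eq (hy k) (hy l)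
    rw [← Pi.single_star] at hnorm
    split_ifs with hkl
    · subst hkl
      have hpos : 0 ≤ star (y k) ⬝ᵥ y k := dotProduct_star_self_nonneg (y k)
      rw [← Complex.norm_of_nonneg' hpos, hnorm]
      simp
    · simpa [hkl] using hnorm
  have hphase : ∀ k, star (star (y k) ⬝ᵥ w) * (star (y k) ⬝ᵥ w) = 1 := fun k => by
    rw [Complex.star_def, Complex.conj_mul', hyw]
    simp
  refine ⟨fun k => (star (y k) ⬝ᵥ w) • y k, fun k => ?_, fun k l => ?_, fun k => ?_⟩
  · rw [rankOne_smul, hyw, hy, one_pow, one_smul]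
  · rw [star_smul, smul_dotProduct, dotProduct_smul, hyy, smul_eq_mul, smul_eq_mul]
    split_ifs with hkl
    · rw [hkl, mul_one, hphase]
    · rw [mul_zero, mul_zero]
  · rw [star_smul, smul_dotProduct, smul_eq_mul, hphase]

theorem exists_normalized (h : WignerSymmetry g) :
    ∃ V ∈ unitaryGroup m ℂ, NormalizedWignerSymmetry (congruence Vᴴ ∘ₗ g) := by
  obtain ⟨w, hw⟩ := h.exists_map_rankOne 1
  obtain ⟨q, hq, hqq, hqw⟩ := h.exists_orthonormal_images hw
  let V : Matrix m m ℂ := of fun i k => q k i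
  have hV : V ∈ unitaryGroup m ℂ := mem_unitaryGroup_iff'.mpr <| by
    ext k l
    exact (hqq k l).trans (one_apply ..).symm
  refine ⟨V, hV, h.congruence_comp (Unitary.star_mem hV), fun k => ?_, ?_⟩
  · rw [LinearMap.comp_apply, hq, congruence_rankOne]
    congr 1
    ext l
    rw [Pi.single_apply]
    exact hqq l k
  · rw [LinearMap.comp_apply, hw, congruence_rankOne]
    congr 1
    ext l
    exact hqw l

theorem exists_eq_congruence (h : WignerSymmetry g) : ∃ V ∈ unitaryGroup m ℂ,
    g = congruence V ∨ g = congruence V ∘ₗ hermitianTranspose m := by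
  obtain ⟨V, hV, hnorm⟩ := h.exists_normalized
  have hg : g = congruence V ∘ₗ (congruence Vᴴ ∘ₗ g) := by
    rw [← LinearMap.comp_assoc, congruence_comp_congruence_conjTranspose hV, LinearMap.id_comp]
  refine ⟨V, hV, hnorm.eq_id_or_hermitianTranspose.imp (fun hid => ?_) fun htr => ?_⟩
  · rw [hg, hid, LinearMap.comp_id]
  · rw [hg, htr]

end WignerSymmetry

end Wigner

section PowerSums

variable {ι : Type*} [Fintype ι] {q : ℝ}

theorem two_sub_two_mul_cos_mul (t a : ℝ) :
    2 - 2 * Real.cos (t * a) = t ^ 2 * (a * Real.sinc (t * a / 2)) ^ 2 := by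
  have hsin : t * a / 2 * Real.sinc (t * a / 2) = Real.sin (t * a / 2) := by
    rcases eq_or_ne (t * a / 2) 0 with h | h
    · simp [h]
    · rw [Real.sinc_of_ne_zero h, mul_div_cancel₀ _ h]
  calc 2 - 2 * Real.cos (t * a) = 4 * Real.sin (t * a / 2) ^ 2 := by
        rw [Real.sin_sq_eq_half_sub, mul_div_cancel₀ _ two_ne_zero]; ring
    _ = t ^ 2 * (a * Real.sinc (t * a / 2)) ^ 2 := by rw [← hsin]; ring

theorem sum_sq_rpow_eq_of_sum_two_sub_two_mul_cos (hq : 0 < q) {a b : ι → ℝ}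
    (h : ∀ t, ∑ i, (2 - 2 * Real.cos (t * a i)) ^ q = ∑ i, (2 - 2 * Real.cos (t * b i)) ^ q) :
    ∑ i, (a i ^ 2) ^ q = ∑ i, (b i ^ 2) ^ q := by
  let F : (ι → ℝ) → ℝ → ℝ := fun a t => ∑ i, ((a i * Real.sinc (t * a i / 2)) ^ 2) ^ q
  have hF : ∀ a, Continuous (F a) := fun a =>
    continuous_finsetSum _ fun i _ => Continuous.rpow_const
      ((continuous_const.mul (Real.continuous_sinc.comp (by fun_prop))).pow 2) fun _ => .inr hq.le
  have hsum : ∀ (a : ι → ℝ) (t : ℝ),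
      ∑ i, (2 - 2 * Real.cos (t * a i)) ^ q = (t ^ 2) ^ q * F a t := fun a t => by
    simp only [F, two_sub_two_mul_cos_mul, Finset.mul_sum,
      Real.mul_rpow (sq_nonneg _) (sq_nonneg _)]
  have hEq : F a = F b := (hF a).ext_on (dense_compl_singleton 0) (hF b) fun t ht => by
    have hpos : 0 < (t ^ 2) ^ q := Real.rpow_pos_of_pos (sq_pos_of_ne_zero ht) q
    exact mul_left_cancel₀ hpos.ne' (by rw [← hsum, ← hsum, h])
  simpa [F] using congrFun hEq 0

theorem exists_sq_eq_one_of_sum_sq_rpow_eq_one (hq : 0 < q) {n : ι → ℤ}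
    (h : ∑ i, ((n i : ℝ) ^ 2) ^ q = 1) : ∃ j, n j ^ 2 = 1 ∧ ∀ i, i ≠ j → n i = 0 := by
  classical
  have hnonneg : ∀ i, 0 ≤ ((n i : ℝ) ^ 2) ^ q := fun i => Real.rpow_nonneg (sq_nonneg _) q
  have hone_le : ∀ {i}, n i ≠ 0 → 1 ≤ ((n i : ℝ) ^ 2) ^ q := fun {i} hi => by
    have : 1 ≤ n i ^ 2 := Int.add_one_le_of_lt (sq_pos_of_ne_zero hi)
    exact Real.one_le_rpow (by exact_mod_cast this) hq.le
  obtain ⟨j, hj⟩ : ∃ j, n j ≠ 0 := by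
    by_contra! hzero
    simp [hzero, hq.ne'] at h
  have hsplit := Finset.add_sum_erase Finset.univ (fun i => ((n i : ℝ) ^ 2) ^ q)
    (Finset.mem_univ j)
  have hrest := Finset.sum_nonneg fun i (_ : i ∈ Finset.univ.erase j) => hnonneg i
  refine ⟨j, ?_, fun i hij => ?_⟩
  · have hterm : ((n j : ℝ) ^ 2) ^ q = 1 := by linarith [hone_le hj]
    rw [← Real.one_rpow q, Real.rpow_left_inj (sq_nonneg _) zero_le_one hq.ne'] at hterm
    exact_mod_cast hterm
  · by_contra hi
    have := Finset.single_le_sum (fun i _ => hnonneg i)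
      (Finset.mem_erase.mpr ⟨hij, Finset.mem_univ i⟩)
    linarith [hone_le hi, hone_le hj]

theorem exists_intCast_eq_of_sum_two_sub_two_mul_cos_eq_zero (hq : 0 < q) {b : ι → ℝ}
    (h : ∑ i, (2 - 2 * Real.cos (2 * Real.pi * b i)) ^ q = 0) : ∃ n : ι → ℤ, ∀ i, b i = n i := by
  have hnonneg : ∀ i, 0 ≤ 2 - 2 * Real.cos (2 * Real.pi * b i) := fun i => by
    linarith [Real.cos_le_one (2 * Real.pi * b i)]
  rw [Finset.sum_eq_zero_iff_of_nonneg fun i _ => Real.rpow_nonneg (hnonneg i) q] at h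
  choose n hn using fun i => (Real.cos_eq_one_iff _).mp <| show Real.cos (2 * Real.pi * b i) = 1 by
    have := (Real.rpow_eq_zero (hnonneg i) hq.ne').mp (h i (Finset.mem_univ i))
    linarith
  exact ⟨n, fun i => mul_left_cancel₀ Real.two_pi_pos.ne' ((hn i).symm.trans (mul_comm _ _))⟩

end PowerSums

section Projections

variable {m : Type*} [Fintype m] [DecidableEq m] {p : ℝ}

theorem eigenvalues_mul_self_of_mul_self_eq_smul {B : Matrix m m ℂ} (hB : B.IsHermitian) {c : ℝ}
    (h : B * B = c • B) (i : m) :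
    hB.eigenvalues i * hB.eigenvalues i = c * hB.eigenvalues i := by
  have hsa : IsSelfAdjoint B := hB
  have hcfc : cfc (fun x : ℝ => x * x) B = cfc (fun x => c * x) B := by
    rw [cfc_mul .., cfc_const_mul .., cfc_id' .., h]
  exact (cfc_eq_cfc_iff_eqOn (ha := hsa)).mp hcfc (hB.eigenvalues_mem_spectrum_real i)

theorem sum_eigenvalues_of_mul_self_eq_smul {B : Matrix m m ℂ} (hB : B.IsHermitian) {c r : ℝ}
    (h : B * B = c • B) (htr : trace B = ((r * c : ℝ) : ℂ)) {φ : ℝ → ℝ} (hφ : φ 0 = 0) :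
    ∑ i, φ (hB.eigenvalues i) = r * φ c := by
  have hmul := eigenvalues_mul_self_of_mul_self_eq_smul hB h
  have hsum : ∑ i, hB.eigenvalues i = r * c := by
    rw [hB.trace_eq_sum_eigenvalues] at htr
    exact Complex.ofReal_injective (by push_cast at htr ⊢; exact htr)
  rcases eq_or_ne c 0 with rfl | hc
  · have hzero : ∀ i, hB.eigenvalues i = 0 := fun i => by simpa using hmul i
    simp [hzero, hφ]
  · have hφ_eq : ∀ i, φ (hB.eigenvalues i) = hB.eigenvalues i * (φ c / c) := fun i => by
      rcases eq_or_ne (hB.eigenvalues i) 0 with h0 | h0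
      · rw [h0, hφ, zero_mul]
      · rw [mul_right_cancel₀ h0 (hmul i), mul_div_cancel₀ _ hc]
    rw [Finset.sum_congr rfl fun i _ => hφ_eq i, ← Finset.sum_mul, hsum]
    field_simp

theorem schatten_of_mul_self_eq_smul (hp : 0 < p) {A : Matrix m m ℂ} {c r : ℝ}
    (h : Aᴴ * A * (Aᴴ * A) = c • (Aᴴ * A)) (htr : trace (Aᴴ * A) = ((r * c : ℝ) : ℂ)) :
    schatten p A = r * c ^ (p / 2) :=
  sum_eigenvalues_of_mul_self_eq_smul _ h htr
    (φ := (· ^ (p / 2))) (Real.zero_rpow (half_pos hp).ne')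

theorem sum_eigenvalues_rankOne {x : m → ℂ} (hx : star x ⬝ᵥ x = 1)
    (hH : (rankOne x).1.IsHermitian) {φ : ℝ → ℝ} (hφ : φ 0 = 0) :
    ∑ i, φ (hH.eigenvalues i) = φ 1 := by
  rw [sum_eigenvalues_of_mul_self_eq_smul hH (c := 1) (r := 1)
    (by rw [rankOne_mul_self hx, one_smul]) (by rw [trace_rankOne, hx]; simp) hφ, one_mul]

theorem schatten_rankOne_sub_rankOne (hp : 0 < p) {x y : m → ℂ} (hx : star x ⬝ᵥ x = 1)
    (hy : star y ⬝ᵥ y = 1) :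
    schatten p (rankOne x - rankOne y).1 = 2 * (1 - ‖star x ⬝ᵥ y‖ ^ 2) ^ (p / 2) := by
  have hsa : (rankOne x - rankOne y).1ᴴ = (rankOne x - rankOne y).1 := (rankOne x - rankOne y).2
  refine schatten_of_mul_self_eq_smul hp ?_ ?_
  · rw [hsa, ← mul_assoc, rankOne_sub_rankOne_cube hx hy, smul_mul_assoc]
  · rw [hsa, trace_rankOne_sub_rankOne_mul_self hx hy]

end Projections

section Generator

open selfAdjoint
open scoped Matrix.Norms.L2Operator

variable {m : Type*}

theorem continuous_rankOne : Continuous (rankOne : (m → ℂ) → HermitianMatrix m) :=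
  Continuous.subtype_mk (continuous_id.matrix_vecMulVec continuous_star) _

theorem isPreconnected_sphere_euclideanSpace_complex [Fintype m] [Nonempty m] :
    IsPreconnected (Metric.sphere (0 : EuclideanSpace ℂ m) 1) := by
  refine isPreconnected_sphere ?_ 0 1
  rw [← Module.finrank_eq_rank, ← Module.finrank_mul_finrank ℝ ℂ (EuclideanSpace ℂ m),
    Complex.finrank_real_complex, finrank_euclideanSpace]
  have : 0 < Fintype.card m := Fintype.card_pos
  exact_mod_cast (by lia : 1 < 2 * Fintype.card m)

instance [Finite m] : FiniteDimensional ℝ (HermitianMatrix m) :=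
  have : FiniteDimensional ℝ (Matrix m m ℂ) := FiniteDimensional.complexToReal _
  inferInstanceAs (FiniteDimensional ℝ (selfAdjoint.submodule ℝ (Matrix m m ℂ)))

theorem re_trace_eq_of_eq_smul_rankOne [Fintype m] {H : HermitianMatrix m} {ε : ℝ} {y : m → ℂ}
    (hy : star y ⬝ᵥ y = 1) (hH : H = ε • rankOne y) : (trace H.1).re = ε := by
  rw [hH, selfAdjoint.val_smul, trace_smul, trace_rankOne, hy]
  simp

variable [Fintype m] [DecidableEq m] {p : ℝ}

/-- The real-linear map `f` of Hermitian matrices preserves the Schatten distance from `1` to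
`exp (i H)`, as does the generator map of an isometry of the unitary group. -/
def PreservesExpSchatten (p : ℝ) (f : HermitianMatrix m →ₗ[ℝ] HermitianMatrix m) : Prop :=
  ∀ H, schatten p (1 - (expUnitary (f H)).1) = schatten p (1 - (expUnitary H).1)

namespace PreservesExpSchatten

variable {f : HermitianMatrix m →ₗ[ℝ] HermitianMatrix m}

theorem sum_two_sub_two_mul_cos (h : PreservesExpSchatten p f) {H : HermitianMatrix m}
    (hH : H.1.IsHermitian) (hfH : (f H).1.IsHermitian) (t : ℝ) :
    ∑ i, (2 - 2 * Real.cos (t * hfH.eigenvalues i)) ^ (p / 2) =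
      ∑ i, (2 - 2 * Real.cos (t * hH.eigenvalues i)) ^ (p / 2) := by
  rw [← schatten_one_sub_expUnitary_smul, ← schatten_one_sub_expUnitary_smul, ← map_smul, h]

theorem schatten_map (h : PreservesExpSchatten p f) (hp : 0 < p) (H : HermitianMatrix m) :
    schatten p (f H).1 = schatten p H.1 := by
  have hH := HermitianMatrix.isHermitian H
  have hfH := HermitianMatrix.isHermitian (f H)
  rw [schatten_eq_sum_sq_eigenvalues p hfH, schatten_eq_sum_sq_eigenvalues p hH]
  exact sum_sq_rpow_eq_of_sum_two_sub_two_mul_cos (half_pos hp) (h.sum_two_sub_two_mul_cos hH hfH)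

theorem exists_map_rankOne_eq_smul (h : PreservesExpSchatten p f) (hp : 0 < p) {x : m → ℂ}
    (hx : star x ⬝ᵥ x = 1) :
    ∃ (ε : ℝ) (y : m → ℂ), ε ^ 2 = 1 ∧ star y ⬝ᵥ y = 1 ∧ f (rankOne x) = ε • rankOne y := by
  have hP := HermitianMatrix.isHermitian (rankOne x)
  have hfP := HermitianMatrix.isHermitian (f (rankOne x))
  have hperiod : ∑ i, (2 - 2 * Real.cos (2 * Real.pi * hfP.eigenvalues i)) ^ (p / 2) = 0 := by
    rw [h.sum_two_sub_two_mul_cos hP hfP, sum_eigenvalues_rankOne hx _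
      (φ := fun s => (2 - 2 * Real.cos (2 * Real.pi * s)) ^ (p / 2)) (by simp [hp.ne'])]
    simp [hp.ne']
  have hpower : ∑ i, (hfP.eigenvalues i ^ 2) ^ (p / 2) = 1 := by
    rw [← schatten_eq_sum_sq_eigenvalues, h.schatten_map hp,
      schatten_eq_sum_sq_eigenvalues p hP,
      sum_eigenvalues_rankOne hx _ (φ := fun s => (s ^ 2) ^ (p / 2)) (by simp [hp.ne'])]
    simp
  obtain ⟨n, hn⟩ := exists_intCast_eq_of_sum_two_sub_two_mul_cos_eq_zero (half_pos hp) hperiod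
  simp only [hn] at hpower
  obtain ⟨j, hj, hzero⟩ := exists_sq_eq_one_of_sum_sq_rpow_eq_one (half_pos hp) hpower
  obtain ⟨v, hv, hsum⟩ := exists_eq_sum_eigenvalues_smul_rankOne hfP
  refine ⟨n j, v j, by exact_mod_cast hj, hv j, ?_⟩
  rw [hsum, Finset.sum_eq_single_of_mem j (Finset.mem_univ j), hn]
  intro i _ hij
  rw [hn, hzero i hij, Int.cast_zero, zero_smul]

theorem exists_sign [Nonempty m] (h : PreservesExpSchatten p f) (hp : 0 < p) :
    ∃ ε : ℝ, (ε = 1 ∨ ε = -1) ∧ ∀ x : m → ℂ, star x ⬝ᵥ x = 1 →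
      ∃ y : m → ℂ, star y ⬝ᵥ y = 1 ∧ f (rankOne x) = ε • rankOne y := by
  -- The sign is the trace of `f (rankOne x)`, which is continuous on the connected unit sphere.
  let s : EuclideanSpace ℂ m → ℝ := fun x => (trace (f (rankOne x.ofLp)).1).re
  have hcont : Continuous s := by
    have hf : Continuous f := f.continuous_of_finiteDimensional
    have hmap : Continuous fun x : EuclideanSpace ℂ m => (f (rankOne x.ofLp)).1 :=
      continuous_subtype_val.comp
        (hf.comp (continuous_rankOne.comp (PiLp.continuous_ofLp 2 _)))
    exact Complex.continuous_re.comp hmap.matrix_trace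
  have hunit : ∀ x ∈ Metric.sphere (0 : EuclideanSpace ℂ m) 1, star x.ofLp ⬝ᵥ x.ofLp = 1 :=
    fun x hx => norm_toLp_eq_one_iff.mp (mem_sphere_zero_iff_norm.mp hx)
  have hsq : Set.EqOn (s ^ 2) 1 (Metric.sphere 0 1) := fun x hx => by
    obtain ⟨ε, y, hε, hy, hxy⟩ := h.exists_map_rankOne_eq_smul hp (hunit x hx)
    rw [Pi.pow_apply, Pi.one_apply, ← hε, ← re_trace_eq_of_eq_smul_rankOne hy hxy]
  have hconst : ∃ ε : ℝ, (ε = 1 ∨ ε = -1) ∧ ∀ x ∈ Metric.sphere 0 1, s x = ε :=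
    (isPreconnected_sphere_euclideanSpace_complex.eq_one_or_eq_neg_one_of_sq_eq
      hcont.continuousOn hsq).elim (fun h1 => ⟨1, .inl rfl, h1⟩) fun h1 => ⟨-1, .inr rfl, h1⟩
  obtain ⟨ε, hε, hs⟩ := hconst
  refine ⟨ε, hε, fun x hx => ?_⟩
  obtain ⟨ε', y, -, hy, hxy⟩ := h.exists_map_rankOne_eq_smul hp hx
  have hε' : ε' = ε := (re_trace_eq_of_eq_smul_rankOne hy hxy).symm.trans
    (hs (WithLp.toLp 2 x) (mem_sphere_zero_iff_norm.mpr (norm_toLp_eq_one_iff.mpr hx)))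
  exact ⟨y, hy, hε' ▸ hxy⟩

theorem norm_dotProduct_sq_eq (h : PreservesExpSchatten p f) (hp : 0 < p) {ε : ℝ}
    (hε : ε = 1 ∨ ε = -1) {x y x' y' : m → ℂ} (hx : star x ⬝ᵥ x = 1) (hy : star y ⬝ᵥ y = 1)
    (hx' : star x' ⬝ᵥ x' = 1) (hy' : star y' ⬝ᵥ y' = 1) (hfx : f (rankOne x) = ε • rankOne x')
    (hfy : f (rankOne y) = ε • rankOne y') : ‖star x' ⬝ᵥ y'‖ ^ 2 = ‖star x ⬝ᵥ y‖ ^ 2 := by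
  have hfsub : f (rankOne x - rankOne y) = ε • (rankOne x' - rankOne y') := by
    rw [map_sub, hfx, hfy, ← smul_sub]
  have hschatten : schatten p (rankOne x' - rankOne y').1 =
      schatten p (rankOne x - rankOne y).1 := by
    rw [← h.schatten_map hp (rankOne x - rankOne y), hfsub]
    rcases hε with rfl | rfl
    · rw [one_smul]
    · rw [neg_one_smul, AddSubgroup.coe_neg, schatten_neg]
  rw [schatten_rankOne_sub_rankOne hp hx hy, schatten_rankOne_sub_rankOne hp hx' hy'] at hschatten
  have hpow := (Real.rpow_left_inj
    (sub_nonneg.mpr (norm_star_dotProduct_sq_le_one hx' hy'))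
    (sub_nonneg.mpr (norm_star_dotProduct_sq_le_one hx hy)) (half_pos hp).ne').mp
    (mul_left_cancel₀ two_ne_zero hschatten)
  exact sub_right_injective hpow

theorem exists_sign_wignerSymmetry [Nonempty m] (h : PreservesExpSchatten p f) (hp : 0 < p) :
    ∃ ε : ℝ, (ε = 1 ∨ ε = -1) ∧ WignerSymmetry (ε • f) := by
  obtain ⟨ε, hε, hf⟩ := h.exists_sign hp
  have hεf : ∀ {x y : m → ℂ}, f (rankOne x) = ε • rankOne y → (ε • f) (rankOne x) = rankOne y :=
    fun hxy => by
      rw [LinearMap.smul_apply, hxy, smul_smul, mul_self_eq_one_iff.mpr hε, one_smul]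
  refine ⟨ε, hε, .of_unit (fun x hx => ?_) fun x y hx hy => ?_⟩
  · obtain ⟨x', -, hfx⟩ := hf x hx
    exact ⟨x', hεf hfx⟩
  · obtain ⟨x', hx', hfx⟩ := hf x hx
    obtain ⟨y', hy', hfy⟩ := hf y hy
    rw [hεf hfx, hεf hfy, trace_rankOne_mul_rankOne, trace_rankOne_mul_rankOne,
      h.norm_dotProduct_sq_eq hp hε hx hy hx' hy' hfx hfy]

theorem exists_eq_congruence [Nonempty m] (h : PreservesExpSchatten p f) (hp : 0 < p) :
    ∃ V ∈ unitaryGroup m ℂ, f = congruence V ∨ f = congruence V ∘ₗ hermitianTranspose m ∨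
      f = -congruence V ∨ f = -(congruence V ∘ₗ hermitianTranspose m) := by
  obtain ⟨ε, rfl | rfl, hwigner⟩ := h.exists_sign_wignerSymmetry hp
  all_goals obtain ⟨V, hV, hf⟩ := hwigner.exists_eq_congruence
  · rw [one_smul] at hf
    exact ⟨V, hV, hf.elim .inl (.inr ∘ .inl)⟩
  · rw [neg_one_smul, neg_eq_iff_eq_neg, neg_eq_iff_eq_neg] at hf
    exact ⟨V, hV, .inr (.inr hf)⟩

end PreservesExpSchatten

end Generator

section UnitaryGroup

open selfAdjoint Unitary
open scoped Matrix.Norms.L2Operator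

variable {m : Type*} [Fintype m] [DecidableEq m]

theorem expUnitary_argSelfAdjoint_of_continuousOn {A : Type*} [CStarAlgebra A] {u : unitary A}
    (harg : ContinuousOn Complex.arg (spectrum ℂ (u : A))) : expUnitary (argSelfAdjoint u) = u := by
  ext1
  rw [expUnitary_coe, argSelfAdjoint_coe, ← CFC.exp_eq_normedSpace_exp (𝕜 := ℂ),
    ← cfc_comp_smul .., ← cfc_comp' ..]
  conv_rhs => rw [← cfc_id' ℂ (u : A)]
  refine cfc_congr fun y hy => ?_
  have hy₁ : ‖y‖ = 1 := spectrum.norm_eq_one_of_unitary u.2 hy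
  have hy₀ : y ≠ 0 := by
    rintro rfl
    simp at hy₁
  have hlog : Complex.I * y.arg = Complex.log y :=
    Complex.ext (by simp [Complex.log_re, hy₁]) (by simp [Complex.log_im])
  simpa [← Complex.exp_eq_exp_ℂ, hlog] using Complex.exp_log hy₀

theorem exists_expUnitary_eq (u : unitary (Matrix m m ℂ)) :
    ∃ H : HermitianMatrix m, expUnitary H = u :=
  ⟨_, expUnitary_argSelfAdjoint_of_continuousOn ((Matrix.finite_spectrum _).continuousOn _)⟩

theorem coe_expUnitary_congruence {V : Matrix m m ℂ} (hV : V ∈ unitaryGroup m ℂ)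
    (H : HermitianMatrix m) : (expUnitary (congruence V H)).1 = V * (expUnitary H).1 * Vᴴ := by
  have hVV : V * Vᴴ = 1 := mem_unitaryGroup_iff.mp hV
  have hconj := Matrix.exp_conj V (Complex.I • H.1) (IsUnit.of_mul_eq_one _ hVV)
  rw [inv_eq_right_inv hVV, Matrix.mul_smul, Matrix.smul_mul] at hconj
  rw [expUnitary_coe, expUnitary_coe]
  exact hconj

theorem coe_expUnitary_hermitianTranspose (H : HermitianMatrix m) :
    (expUnitary (hermitianTranspose m H)).1 = (expUnitary H).1ᵀ := by
  rw [expUnitary_coe, expUnitary_coe, ← Matrix.exp_transpose, transpose_smul]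
  rfl

theorem coe_expUnitary_neg (H : HermitianMatrix m) :
    (expUnitary (-H)).1 = (expUnitary H).1ᴴ := by
  rw [expUnitary_coe, expUnitary_coe, ← Matrix.exp_conjTranspose, conjTranspose_smul,
    HermitianMatrix.isHermitian H, AddSubgroup.coe_neg]
  simp

theorem exists_conj_of_schatten_isometry [Nonempty m] {p : ℝ} (hp : 0 < p)
    {φ : unitary (Matrix m m ℂ) → unitary (Matrix m m ℂ)}
    (hφ : ∀ u v, schatten p ((φ u).1 - (φ v).1) = schatten p (u.1 - v.1)) (hone : φ 1 = 1) :
    ∃ V ∈ unitaryGroup m ℂ,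
      (∀ u, (φ u).1 = V * u.1 * Vᴴ) ∨ (∀ u, (φ u).1 = V * u.1ᵀ * Vᴴ) ∨
      (∀ u, (φ u).1 = V * u.1ᴴ * Vᴴ) ∨ (∀ u, (φ u).1 = V * u.1.map (starRingEnd ℂ) * Vᴴ) := by
  obtain ⟨f, hf⟩ := (unitaryGauge_schatten (m := m) hp).exists_linearMap_of_isometry hφ hone
  have hpres : PreservesExpSchatten p f := fun H => by
    simpa [hone, hf] using hφ 1 (expUnitary H)
  have hexp : ∀ {g : Matrix m m ℂ → Matrix m m ℂ},
      (∀ H, (expUnitary (f H)).1 = g (expUnitary H).1) → ∀ u, (φ u).1 = g u.1 := fun hg u => by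
    obtain ⟨H, rfl⟩ := exists_expUnitary_eq u
    rw [hf, hg]
  obtain ⟨V, hV, hfV⟩ := hpres.exists_eq_congruence hp
  refine ⟨V, hV, hfV.imp ?_ <| .imp ?_ <| .imp ?_ ?_⟩ <;> rintro rfl
  · exact hexp (g := fun U => V * U * Vᴴ) fun H => coe_expUnitary_congruence hV H
  · refine hexp (g := fun U => V * Uᵀ * Vᴴ) fun H => ?_
    rw [LinearMap.comp_apply, coe_expUnitary_congruence hV, coe_expUnitary_hermitianTranspose]
  · refine hexp (g := fun U => V * Uᴴ * Vᴴ) fun H => ?_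
    rw [LinearMap.neg_apply, ← map_neg, coe_expUnitary_congruence hV, coe_expUnitary_neg]
  · refine hexp (g := fun U => V * U.map (starRingEnd ℂ) * Vᴴ) fun H => ?_
    rw [LinearMap.neg_apply, ← map_neg, LinearMap.comp_apply, coe_expUnitary_congruence hV,
      coe_expUnitary_hermitianTranspose, coe_expUnitary_neg]
    rfl

theorem stmt0_general [Nonempty m] {p : ℝ} (hp : 0 < p) (ψ : Matrix m m ℂ → Matrix m m ℂ)
    (hmem : ∀ U ∈ unitaryGroup m ℂ, ψ U ∈ unitaryGroup m ℂ)
    (hiso : ∀ U ∈ unitaryGroup m ℂ, ∀ V ∈ unitaryGroup m ℂ,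
      lpnorm p (ψ U - ψ V) = lpnorm p (U - V)) :
    ∃ W ∈ unitaryGroup m ℂ, ∃ V ∈ unitaryGroup m ℂ,
      (∀ U ∈ unitaryGroup m ℂ, ψ U = W * (V * U * Vᴴ)) ∨
      (∀ U ∈ unitaryGroup m ℂ, ψ U = W * (V * Uᵀ * Vᴴ)) ∨
      (∀ U ∈ unitaryGroup m ℂ, ψ U = W * (V * Uᴴ * Vᴴ)) ∨
      (∀ U ∈ unitaryGroup m ℂ, ψ U = W * (V * U.map (starRingEnd ℂ) * Vᴴ)) := by
  let θ : unitary (Matrix m m ℂ) → unitary (Matrix m m ℂ) := fun u => ⟨ψ u.1, hmem u.1 u.2⟩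
  have hθ : ∀ u v, schatten p (((θ 1)⁻¹ * θ u).1 - ((θ 1)⁻¹ * θ v).1) = schatten p (u.1 - v.1) :=
    fun u v => ((unitaryGauge_schatten hp).mul_left _ _ _).trans <|
      schatten_eq_of_lpnorm_eq hp (hiso u.1 u.2 v.1 v.2)
  obtain ⟨V, hV, hforms⟩ := exists_conj_of_schatten_isometry hp hθ (inv_mul_cancel _)
  have hψ : ∀ {g : Matrix m m ℂ → Matrix m m ℂ}, (∀ u, ((θ 1)⁻¹ * θ u).1 = V * g u.1 * Vᴴ) →
      ∀ U ∈ unitaryGroup m ℂ, ψ U = ψ 1 * (V * g U * Vᴴ) := fun hg U hU => by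
    rw [← hg ⟨U, hU⟩]
    exact congrArg Subtype.val (mul_inv_cancel_left (θ 1) (θ ⟨U, hU⟩)).symm
  exact ⟨ψ 1, hmem 1 (one_mem _), V, hV, hforms.imp hψ <| .imp hψ <| .imp hψ hψ⟩

end UnitaryGroup

/-- Surjective `L^p`-isometries of the unitary group of `Mₙ(ℂ)`: each is of the form
`U ↦ W·φ(U)` or `U ↦ W·φ(U*)` with `φ` a *-automorphism (`U ↦ VUVᴴ`) or a
*-anti-automorphism (`U ↦ VUᵀVᴴ`) of `Mₙ(ℂ)`. -/
theorem stmt0 (n : ℕ) (hn : 1 ≤ n) (p : ℝ) (hp : 0 < p)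
    (ψ : Matrix (Fin n) (Fin n) ℂ → Matrix (Fin n) (Fin n) ℂ)
    (hmem : ∀ U ∈ Matrix.unitaryGroup (Fin n) ℂ, ψ U ∈ Matrix.unitaryGroup (Fin n) ℂ)
    (hsurj : ∀ V ∈ Matrix.unitaryGroup (Fin n) ℂ,
      ∃ U ∈ Matrix.unitaryGroup (Fin n) ℂ, ψ U = V)
    (hiso : ∀ U ∈ Matrix.unitaryGroup (Fin n) ℂ, ∀ V ∈ Matrix.unitaryGroup (Fin n) ℂ,
      lpnorm p (ψ U - ψ V) = lpnorm p (U - V)) :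
    ∃ W ∈ Matrix.unitaryGroup (Fin n) ℂ, ∃ V ∈ Matrix.unitaryGroup (Fin n) ℂ,
      (∀ U ∈ Matrix.unitaryGroup (Fin n) ℂ, ψ U = W * (V * U * Vᴴ)) ∨
      (∀ U ∈ Matrix.unitaryGroup (Fin n) ℂ, ψ U = W * (V * Uᵀ * Vᴴ)) ∨
      (∀ U ∈ Matrix.unitaryGroup (Fin n) ℂ, ψ U = W * (V * Uᴴ * Vᴴ)) ∨
      (∀ U ∈ Matrix.unitaryGroup (Fin n) ℂ, ψ U = W * (V * U.map (starRingEnd ℂ) * Vᴴ)) := by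
  have : Nonempty (Fin n) := ⟨⟨0, hn⟩⟩
  exact stmt0_general hp ψ hmem hiso
end

section
/- Let n ≥ 1, p ∈ (0,∞), and let ψ : 𝒰(Mₙ(ℂ)) → 𝒰(Mₙ(ℂ)) be a surjective L^p-isometry with ψ(I) = I. Then there exists a unitary V ∈ Mₙ(ℂ) such that either ψ(U) = V U Vᴴ for every self-adjoint unitary U ∈ Mₙ(ℂ), or ψ(U) = V Uᵀ Vᴴ for every self-adjoint unitary U ∈ Mₙ(ℂ). -/
open Matrix
open scoped ComplexOrder

/-!
Write `Tr |A|^p` for the `p`-th power of the unnormalized norm. If `U` is unitary then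
`A = (U - 1) / 2` and `C = (U + 1) / 2` satisfy `Aᴴ A + Cᴴ C = 1`, so that `Tr |A|^p + Tr |C|^p` is
the trace of `t ^ (p/2) + (1 - t) ^ (p/2)` at `t = Aᴴ A`. For `p ≠ 2` this function equals `1` on
`[0, 1]` only at the end points, so self-adjointness of `U`, which amounts to `Aᴴ A` being
idempotent, is visible in the distances of `U` from `1` and `-1`, and `ψ (-1) = -1` because `-1` is
the only unitary at maximal distance from `1`. For `p = 2` the map preserves `Re Tr (Uᴴ V)`, hence
all real linear relations between unitaries; it then maps the span of the skew-adjoint unitaries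
onto itself, and therefore its orthogonal complement, the self-adjoint matrices, into itself.

Consequently `P ↦ (1 - ψ (1 - 2 P)) / 2` is an isometry of the set of orthogonal projections. The
distance from `0` determines `Tr P`, and when `Q` has rank one the distance of `P` from `Q`
determines `Tr (P Q)`: all eigenvalues of `(P - Q)²` lie in `{0, 1, 1 - Tr (P Q)}`. So transition
probabilities between lines are preserved, and the map is given by Wigner's theorem on lines, hence
on all projections because `P` is determined by the numbers `Tr (P Q)`.

For Wigner's theorem, compose with a unitary so that the coordinate axes and the line of the
all-ones vector are fixed. Testing against `e_j + e_k` and `e_j + i e_k` shows that the entry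
`x_j x̄_k` of the projection onto `x` is either fixed or conjugated, and the choice does not depend
on the pair `j, k`.
-/

section FunctionalCalculus

variable {m : Type*} [Fintype m] [DecidableEq m]

lemma continuousOn_spectrum_real (f : ℝ → ℝ) (B : Matrix m m ℂ) :
    ContinuousOn f (spectrum ℝ B) :=
  B.finite_real_spectrum.continuousOn f

lemma re_trace_cfc {B : Matrix m m ℂ} (hB : B.IsHermitian) (f : ℝ → ℝ) :
    (cfc f B).trace.re = ∑ i, f (hB.eigenvalues i) := by
  rw [hB.cfc_eq, IsHermitian.cfc, Unitary.conjStarAlgAut_apply, trace_mul_cycle,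
    Unitary.coe_star_mul_self, one_mul, trace_diagonal]
  simp

lemma eqOn_zero_of_re_trace_cfc_eq_zero {B : Matrix m m ℂ} (hB : B.IsHermitian) {f : ℝ → ℝ}
    (hf : ∀ t ∈ spectrum ℝ B, 0 ≤ f t) (h : (cfc f B).trace.re = 0) :
    Set.EqOn f 0 (spectrum ℝ B) := by
  rw [hB.spectrum_real_eq_range_eigenvalues, Set.forall_mem_range] at hf
  rw [re_trace_cfc hB, Finset.sum_eq_zero_iff_of_nonneg fun i _ => hf i] at h
  rw [hB.spectrum_real_eq_range_eigenvalues, Set.eqOn_range]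
  exact funext fun i => h i (Finset.mem_univ i)

/-- If the spectrum of `B` lies in `{0, 1, w}`, then on it every `f` fixing `0` and `1` agrees with
a polynomial `t + c (t - t²)`. -/
lemma exists_cfc_eq_add_smul {B : Matrix m m ℂ} (hB : B.IsHermitian) {w : ℝ}
    (h : (B - B ^ 2) * (B - algebraMap ℝ _ w) = 0) {f : ℝ → ℝ} (h0 : f 0 = 0) (h1 : f 1 = 1) :
    ∃ c : ℝ, c * (w - w ^ 2) = f w - w ∧ cfc f B = B + c • (B - B ^ 2) := by
  have hB' : IsSelfAdjoint B := hB
  have hspec : Set.EqOn (fun t => (t - t ^ 2) * (t - w)) 0 (spectrum ℝ B) := by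
    refine eqOn_of_cfc_eq_cfc ?_
    rw [cfc_mul _ _ B, cfc_sub _ _ B, cfc_sub _ _ B, cfc_pow _ _ B, cfc_id' ℝ B, cfc_const w B, h,
      Pi.zero_def, cfc_const_zero ℝ B]
  have hw : w - w ^ 2 = 0 → f w = w := fun hw => by
    rcases mul_eq_zero.1 (show w * (1 - w) = 0 by linarith) with hw | hw
    · rw [hw, h0]
    · rw [show w = 1 by linarith, h1]
  refine ⟨(f w - w) / (w - w ^ 2), ?_, ?_⟩
  · exact div_mul_cancel_of_imp fun h => by rw [hw h, sub_self]
  have hf : Set.EqOn f (fun t => t + (f w - w) / (w - w ^ 2) * (t - t ^ 2)) (spectrum ℝ B) := by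
    intro t ht
    rcases mul_eq_zero.1 (hspec ht) with ht | ht
    · rcases mul_eq_zero.1 (show t * (1 - t) = 0 by linarith) with ht | ht
      · simp [ht, h0]
      · simp [show t = 1 by linarith, h1]
    · obtain rfl : t = w := by linarith
      dsimp only
      rw [div_mul_cancel_of_imp fun h => by rw [hw h, sub_self]]
      ring
  rw [cfc_congr hf, cfc_add B _ _, cfc_const_mul _ _ B, cfc_sub _ _ B, cfc_pow _ _ B, cfc_id' ℝ B]

lemma nonneg_of_mem_spectrum_conjTranspose_mul_self {A : Matrix m m ℂ} {t : ℝ}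
    (ht : t ∈ spectrum ℝ (Aᴴ * A)) : 0 ≤ t := by
  have hA := posSemidef_conjTranspose_mul_self A
  rw [hA.isHermitian.spectrum_real_eq_range_eigenvalues] at ht
  obtain ⟨i, rfl⟩ := ht
  exact hA.eigenvalues_nonneg i

end FunctionalCalculus

section SchattenPow

variable {m : Type*} [Fintype m] [DecidableEq m] {p : ℝ}

/-- The trace `Tr |A|^p`, i.e. the `p`-th power of the unnormalized Schatten `p`-norm of `A`,
with `|A|^p` computed as `(Aᴴ * A)^(p/2)`. -/
noncomputable def schattenPow (p : ℝ) (A : Matrix m m ℂ) : ℝ :=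
  (cfc (fun t : ℝ => t ^ (p / 2)) (Aᴴ * A)).trace.re

lemma lpnorm_eq (p : ℝ) (A : Matrix m m ℂ) :
    lpnorm p A = (schattenPow p A / Fintype.card m) ^ (1 / p) := by
  rw [lpnorm, schattenPow, re_trace_cfc (posSemidef_conjTranspose_mul_self A).isHermitian]

lemma schattenPow_nonneg (p : ℝ) (A : Matrix m m ℂ) : 0 ≤ schattenPow p A := by
  rw [schattenPow, re_trace_cfc (posSemidef_conjTranspose_mul_self A).isHermitian]
  exact Finset.sum_nonneg fun i _ =>
    Real.rpow_nonneg ((posSemidef_conjTranspose_mul_self A).eigenvalues_nonneg i) _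

lemma schattenPow_eq_of_lpnorm_eq (hp : p ≠ 0) {A B : Matrix m m ℂ}
    (h : lpnorm p A = lpnorm p B) : schattenPow p A = schattenPow p B := by
  rcases isEmpty_or_nonempty m with hm | hm
  · rw [Subsingleton.elim A B]
  have hcard : (0 : ℝ) < Fintype.card m := by exact_mod_cast Fintype.card_pos
  rw [lpnorm_eq, lpnorm_eq, Real.rpow_left_inj (by positivity [schattenPow_nonneg p A])
    (by positivity [schattenPow_nonneg p B]) (one_div_ne_zero hp)] at h
  exact (div_left_inj' hcard.ne').1 h

lemma schattenPow_smul (p : ℝ) {r : ℝ} (hr : 0 ≤ r) (A : Matrix m m ℂ) :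
    schattenPow p (r • A) = r ^ p * schattenPow p A := by
  have hA := (posSemidef_conjTranspose_mul_self A).isHermitian.isSelfAdjoint
  have hscale : (r • A)ᴴ * (r • A) = (r ^ 2) • (Aᴴ * A) := by
    rw [conjTranspose_smul, star_trivial, smul_mul_smul_comm, sq]
  have hpow : Set.EqOn (fun t : ℝ => (r ^ 2 * t) ^ (p / 2)) (fun t => r ^ p * t ^ (p / 2))
      (spectrum ℝ (Aᴴ * A)) := by
    intro t ht
    dsimp only
    rw [Real.mul_rpow (sq_nonneg r) (nonneg_of_mem_spectrum_conjTranspose_mul_self ht),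
      ← Real.rpow_natCast_mul hr, Nat.cast_ofNat, mul_div_cancel₀ p two_ne_zero]
  rw [schattenPow, schattenPow, hscale,
    ← cfc_comp_const_mul (r ^ 2) _ _ ((finite_real_spectrum.image _).continuousOn _) hA,
    cfc_congr hpow, cfc_const_mul _ _ _ (continuousOn_spectrum_real _ _), trace_smul,
    Complex.real_smul, Complex.re_ofReal_mul]

lemma schattenPow_two (A : Matrix m m ℂ) : schattenPow 2 A = (Aᴴ * A).trace.re := by
  have hA := (posSemidef_conjTranspose_mul_self A).isHermitian.isSelfAdjoint
  simp only [schattenPow, div_self (two_ne_zero' ℝ), Real.rpow_one]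
  rw [cfc_id' ℝ (Aᴴ * A)]

lemma schattenPow_of_isStarProjection (hp : p ≠ 0) {P : Matrix m m ℂ} (hP : IsStarProjection P) :
    schattenPow p P = P.trace.re := by
  have hPP : Pᴴ * P = P := by rw [← star_eq_conjTranspose, hP.isSelfAdjoint, hP.isIdempotentElem]
  have hpow : Set.EqOn (fun t : ℝ => t ^ (p / 2)) id (spectrum ℝ P) := by
    intro t ht
    rcases hP.isIdempotentElem.spectrum_subset ℝ ht with rfl | rfl <;> simp [hp]
  rw [schattenPow, hPP, cfc_congr hpow, cfc_id ℝ P hP.isSelfAdjoint]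

end SchattenPow

section Complementary

variable {m : Type*} [Fintype m] [DecidableEq m] {p : ℝ} {A C : Matrix m m ℂ}

lemma mem_Icc_of_mem_spectrum_of_add_eq_one (h : Aᴴ * A + Cᴴ * C = 1) {t : ℝ}
    (ht : t ∈ spectrum ℝ (Aᴴ * A)) : t ∈ Set.Icc 0 1 := by
  refine ⟨nonneg_of_mem_spectrum_conjTranspose_mul_self ht, ?_⟩
  have hC : 1 - t ∈ spectrum ℝ (Cᴴ * C) := by
    rw [eq_sub_of_add_eq' h, ← map_one (algebraMap ℝ (Matrix m m ℂ)), ← spectrum.singleton_sub_eq]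
    exact Set.sub_mem_sub rfl ht
  linarith [nonneg_of_mem_spectrum_conjTranspose_mul_self hC]

lemma schattenPow_add_schattenPow_of_add_eq_one (p : ℝ) (h : Aᴴ * A + Cᴴ * C = 1) :
    schattenPow p A + schattenPow p C =
      (cfc (fun t : ℝ => t ^ (p / 2) + (1 - t) ^ (p / 2)) (Aᴴ * A)).trace.re := by
  have hA := (posSemidef_conjTranspose_mul_self A).isHermitian.isSelfAdjoint
  have hC : Cᴴ * C = cfc (fun t : ℝ => 1 - t) (Aᴴ * A) := by
    rw [cfc_sub _ _ _, cfc_const_one ℝ (Aᴴ * A), cfc_id' ℝ (Aᴴ * A), eq_sub_of_add_eq' h]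
  rw [cfc_add _ _ _ (continuousOn_spectrum_real _ _) (continuousOn_spectrum_real _ _), trace_add,
    Complex.add_re, schattenPow, schattenPow, hC,
    ← cfc_comp' _ _ _ ((finite_real_spectrum.image _).continuousOn _)]

lemma eq_zero_of_schattenPow_eq_card (hp : 0 < p) (h : Aᴴ * A + Cᴴ * C = 1)
    (hA : schattenPow p A = Fintype.card m) : C = 0 := by
  have hsa := (posSemidef_conjTranspose_mul_self A).isHermitian.isSelfAdjoint
  have htrace : (cfc (fun t : ℝ => 1 - t ^ (p / 2)) (Aᴴ * A)).trace.re = 0 := by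
    rw [cfc_sub _ _ _ (continuousOn_spectrum_real _ _) (continuousOn_spectrum_real _ _),
      cfc_const_one ℝ (Aᴴ * A) hsa, trace_sub, Complex.sub_re, ← schattenPow, hA, trace_one]
    simp
  have hspec : Set.EqOn (fun t : ℝ => 1 - t ^ (p / 2)) 0 (spectrum ℝ (Aᴴ * A)) := by
    refine eqOn_zero_of_re_trace_cfc_eq_zero hsa (fun t ht => ?_) htrace
    obtain ⟨h0, h1⟩ := mem_Icc_of_mem_spectrum_of_add_eq_one h ht
    exact sub_nonneg.2 (Real.rpow_le_one h0 h1 (half_pos hp).le)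
  have hAA : Aᴴ * A = 1 := by
    rw [← cfc_id ℝ (Aᴴ * A) hsa, ← cfc_one ℝ (Aᴴ * A) hsa]
    refine cfc_congr fun t ht => ?_
    have h0 := (mem_Icc_of_mem_spectrum_of_add_eq_one h ht).1
    refine (Real.rpow_left_inj h0 zero_le_one (half_pos hp).ne').1 ?_
    rw [Real.one_rpow, ← sub_eq_zero.1 (hspec ht)]
  rwa [hAA, add_eq_left, conjTranspose_mul_self_eq_zero] at h

lemma one_sub_mul_rpow_sub_self_pos {q c : ℝ} (hq : q ≠ 1) (hc : c ∈ Set.Ioo 0 1) :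
    0 < (1 - q) * (c ^ q - c) := by
  rcases hq.lt_or_gt with hq | hq
  · exact mul_pos (sub_pos.2 hq) (sub_pos.2 (Real.self_lt_rpow_of_lt_one hc.1 hc.2 hq))
  · exact mul_pos_of_neg_of_neg (sub_neg.2 hq)
      (sub_neg.2 (Real.rpow_lt_self_of_lt_one hc.1 hc.2 hq))

lemma schattenPow_add_schattenPow_eq_card (hp : p ≠ 0) (h : Aᴴ * A + Cᴴ * C = 1)
    (hA : IsIdempotentElem (Aᴴ * A)) : schattenPow p A + schattenPow p C = Fintype.card m := by
  have hpow : Set.EqOn (fun t : ℝ => t ^ (p / 2) + (1 - t) ^ (p / 2)) 1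
      (spectrum ℝ (Aᴴ * A)) := by
    intro t ht
    rcases hA.spectrum_subset ℝ ht with rfl | rfl <;> simp [hp]
  rw [schattenPow_add_schattenPow_of_add_eq_one p h, cfc_congr hpow,
    cfc_one ℝ (Aᴴ * A) (posSemidef_conjTranspose_mul_self A).isHermitian.isSelfAdjoint, trace_one]
  simp

lemma isIdempotentElem_of_schattenPow_add_schattenPow_eq_card (hp : p ≠ 0) (hp2 : p ≠ 2)
    (h : Aᴴ * A + Cᴴ * C = 1) (hAC : schattenPow p A + schattenPow p C = Fintype.card m) :
    IsIdempotentElem (Aᴴ * A) := by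
  have hsa := (posSemidef_conjTranspose_mul_self A).isHermitian.isSelfAdjoint
  have hq : p / 2 ≠ 1 := fun hq => hp2 ((div_eq_one_iff_eq two_ne_zero).1 hq)
  let f : ℝ → ℝ := fun t => (1 - p / 2) * (t ^ (p / 2) + (1 - t) ^ (p / 2) - 1)
  have hf {t : ℝ} (ht : t ∈ Set.Ioo 0 1) : 0 < f t := by
    have h1 := one_sub_mul_rpow_sub_self_pos hq ht
    have h2 := one_sub_mul_rpow_sub_self_pos hq (Set.Ioo.one_sub_mem ht)
    dsimp only [f]
    linarith
  have hcases {t : ℝ} (ht : t ∈ spectrum ℝ (Aᴴ * A)) : t ∈ ({0, 1} : Set ℝ) ∨ t ∈ Set.Ioo 0 1 := by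
    rw [or_comm, ← Set.mem_union, Set.Ioo_union_both zero_le_one]
    exact mem_Icc_of_mem_spectrum_of_add_eq_one h ht
  have hf_nonneg : ∀ t ∈ spectrum ℝ (Aᴴ * A), 0 ≤ f t := fun t ht => by
    rcases hcases ht with (rfl | rfl) | ht
    · simp [f, hp]
    · simp [f, hp]
    · exact (hf ht).le
  have htrace : (cfc f (Aᴴ * A)).trace.re = 0 := by
    rw [cfc_const_mul _ _ _ (continuousOn_spectrum_real _ _),
      cfc_sub _ _ _ (continuousOn_spectrum_real _ _) (continuousOn_spectrum_real _ _),
      cfc_const_one ℝ (Aᴴ * A) hsa, trace_smul, trace_sub, Complex.real_smul,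
      Complex.re_ofReal_mul, Complex.sub_re, ← schattenPow_add_schattenPow_of_add_eq_one p h, hAC,
      trace_one]
    simp
  have hspec := eqOn_zero_of_re_trace_cfc_eq_zero hsa hf_nonneg htrace
  refine (isStarProjection_iff_spectrum_subset_and_isSelfAdjoint.2
    ⟨fun t ht => (hcases ht).resolve_right fun h01 => (hf h01).ne' (hspec ht), hsa⟩).1

end Complementary

section IdempotentPair

variable {𝕜 R : Type*} [CommRing 𝕜] [Ring R] [Algebra 𝕜 R] {P Q : R} {t : 𝕜}

lemma sq_sub_sub_sq_sq_sub (hP : IsIdempotentElem P) (hQ : IsIdempotentElem Q)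
    (h : Q * P * Q = t • Q) :
    (P - Q) ^ 2 - ((P - Q) ^ 2) ^ 2 = t • Q + P * Q * P - t • (P * Q + Q * P) := by
  have hQPQ : Q * (P * Q) = t • Q := by rw [← mul_assoc, h]
  have hQPQ' (X : R) : Q * (P * (Q * X)) = t • (Q * X) := by
    rw [← mul_assoc P, ← mul_assoc Q, hQPQ, smul_mul_assoc]
  have hPP (X : R) : P * (P * X) = P * X := by rw [← mul_assoc, hP]
  have hQQ (X : R) : Q * (Q * X) = Q * X := by rw [← mul_assoc, hQ]
  simp only [sq, mul_sub, sub_mul, mul_assoc, hP.eq, hQ.eq, hPP, hQQ, hQPQ, hQPQ', mul_smul_comm]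
  module

lemma sq_sub_sub_sq_sq_sub_mul (hP : IsIdempotentElem P) (hQ : IsIdempotentElem Q)
    (h : Q * P * Q = t • Q) :
    ((P - Q) ^ 2 - ((P - Q) ^ 2) ^ 2) * ((P - Q) ^ 2 - algebraMap 𝕜 R (1 - t)) = 0 := by
  let B := (P - Q) ^ 2 - algebraMap 𝕜 R (1 - t)
  have hQB : Q * B = 0 := by
    simp only [B, sq, mul_sub, sub_mul, ← mul_assoc, hP.eq, hQ.eq, h,
      Algebra.algebraMap_eq_smul_one, mul_smul_comm, mul_one]
    module
  have hPB : Commute P B := by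
    refine Commute.sub_right ?_ (Algebra.commutes (1 - t) P).symm
    simp only [Commute, SemiconjBy, sq, mul_sub, sub_mul, ← mul_assoc, hP.eq]
    simp only [mul_assoc, hP.eq, hQ.eq]
    abel
  have hQPB : Q * P * B = 0 := by rw [mul_assoc, hPB.eq, ← mul_assoc, hQB, zero_mul]
  rw [sq_sub_sub_sq_sq_sub hP hQ h]
  change _ * B = 0
  simp only [add_mul, sub_mul, smul_mul_assoc, mul_assoc P, hQPB, hQB, mul_zero,
    smul_zero, add_zero, sub_zero]

end IdempotentPair

section ProjectionPair

variable {m : Type*} [Fintype m] [DecidableEq m] {p : ℝ}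

lemma schattenPow_sub_of_mul_mul_eq_smul (hp : p ≠ 0) {P Q : Matrix m m ℂ}
    (hP : IsStarProjection P) (hQ : IsStarProjection Q) {t : ℝ} (h : Q * P * Q = t • Q) :
    schattenPow p (P - Q) =
      P.trace.re - Q.trace.re + 2 * (1 - t) ^ (p / 2) * Q.trace.re := by
  have hsa : IsSelfAdjoint (P - Q) := hP.isSelfAdjoint.sub hQ.isSelfAdjoint
  obtain ⟨c, hc, hcfc⟩ := exists_cfc_eq_add_smul (hsa.pow 2)
    (sq_sub_sub_sq_sq_sub_mul hP.isIdempotentElem hQ.isIdempotentElem h)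
    (f := fun t : ℝ => t ^ (p / 2)) (by simp [hp]) (by simp)
  have hPQ : (P * Q).trace = t • Q.trace := by
    rw [← trace_smul, ← h, trace_mul_comm (Q * P), ← mul_assoc, hQ.isIdempotentElem.eq,
      trace_mul_comm]
  have hPQP : (P * Q * P).trace = t • Q.trace := by
    rw [trace_mul_comm, ← mul_assoc, hP.isIdempotentElem, hPQ]
  have hB : ((P - Q) ^ 2).trace.re = P.trace.re + Q.trace.re - 2 * t * Q.trace.re := by
    simp only [sq, mul_sub, sub_mul, hP.isIdempotentElem.eq, hQ.isIdempotentElem.eq, trace_sub,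
      trace_mul_comm Q P, hPQ, Complex.sub_re, Complex.real_smul, Complex.re_ofReal_mul]
    ring
  rw [schattenPow, ← star_eq_conjTranspose, hsa.star_eq, ← sq, hcfc,
    sq_sub_sub_sq_sq_sub hP.isIdempotentElem hQ.isIdempotentElem h]
  simp only [trace_add, trace_sub, trace_smul, trace_mul_comm Q P, hPQ, hPQP, Complex.add_re,
    Complex.sub_re, Complex.real_smul, Complex.re_ofReal_mul, hB]
  linear_combination 2 * Q.trace.re * hc

end ProjectionPair

section Line

variable {m : Type*} [Fintype m]

/-- The orthogonal projection onto the line spanned by `x`; it is `0` for `x = 0`. -/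
noncomputable def lineProj (x : m → ℂ) : Matrix m m ℂ :=
  (star x ⬝ᵥ x)⁻¹ • vecMulVec x (star x)

lemma smul_lineProj (x : m → ℂ) : (star x ⬝ᵥ x) • lineProj x = vecMulVec x (star x) := by
  rcases eq_or_ne x 0 with rfl | hx
  · simp
  · exact smul_inv_smul₀ (dotProduct_star_self_eq_zero.not.2 hx) _

lemma lineProj_zero : lineProj (0 : m → ℂ) = 0 := by simp [lineProj]

lemma trace_lineProj {x : m → ℂ} (hx : x ≠ 0) : (lineProj x).trace = 1 := by
  rw [lineProj, trace_smul, trace_vecMulVec, dotProduct_comm x (star x), smul_eq_mul]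
  exact inv_mul_cancel₀ (dotProduct_star_self_eq_zero.not.2 hx)

lemma vecMulVec_mul_mul_vecMulVec (x : m → ℂ) (A : Matrix m m ℂ) :
    vecMulVec x (star x) * A * vecMulVec x (star x) =
      (A * vecMulVec x (star x)).trace • vecMulVec x (star x) := by
  rw [vecMulVec_mul, vecMulVec_mul_vecMulVec, vecMulVec_smul, mul_vecMulVec, trace_vecMulVec,
    dotProduct_comm (A *ᵥ x), dotProduct_mulVec]

lemma lineProj_mul_mul_lineProj (x : m → ℂ) (A : Matrix m m ℂ) :
    lineProj x * A * lineProj x = (A * lineProj x).trace • lineProj x := by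
  simp only [lineProj, smul_mul_assoc, mul_smul_comm, vecMulVec_mul_mul_vecMulVec, trace_smul,
    smul_smul, smul_eq_mul]
  ring_nf

lemma isSelfAdjoint_lineProj (x : m → ℂ) : IsSelfAdjoint (lineProj x) := by
  have h : star (star x ⬝ᵥ x) = star x ⬝ᵥ x := (star_dotProduct x x).symm
  rw [IsSelfAdjoint, star_eq_conjTranspose, lineProj, conjTranspose_smul, conjTranspose_vecMulVec,
    star_star, star_inv₀, h]

lemma isStarProjection_lineProj (x : m → ℂ) : IsStarProjection (lineProj x) := by
  classical
  refine ⟨?_, isSelfAdjoint_lineProj x⟩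
  rcases eq_or_ne x 0 with rfl | hx
  · rw [lineProj_zero]
    exact IsIdempotentElem.zero
  · simpa [trace_lineProj hx, IsIdempotentElem] using lineProj_mul_mul_lineProj x 1

lemma isStarProjection_eq_zero_of_trace_eq_zero {P : Matrix m m ℂ} (hP : IsStarProjection P)
    (h : P.trace = 0) : P = 0 := by
  rwa [← trace_conjTranspose_mul_self_eq_zero_iff, ← star_eq_conjTranspose, hP.isSelfAdjoint,
    hP.isIdempotentElem]

lemma exists_eq_lineProj {P : Matrix m m ℂ} (hP : IsStarProjection P) (htr : P.trace = 1) :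
    ∃ y, y ≠ 0 ∧ P = lineProj y := by
  classical
  obtain ⟨x, hx⟩ : ∃ x, P *ᵥ x ≠ 0 := by
    by_contra! h
    have hP0 : P = 0 := ext_of_mulVec_single fun j => by rw [h, zero_mulVec]
    simp [hP0] at htr
  refine ⟨P *ᵥ x, hx, sub_eq_zero.1 ?_⟩
  have hmul : P * lineProj (P *ᵥ x) = lineProj (P *ᵥ x) := by
    rw [lineProj, mul_smul_comm, mul_vecMulVec, mulVec_mulVec, hP.isIdempotentElem]
  refine isStarProjection_eq_zero_of_trace_eq_zero
    ((isStarProjection_lineProj _).sub_of_mul_eq_right hP hmul) ?_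
  rw [trace_sub, htr, trace_lineProj hx, sub_self]

lemma exists_vecMulVec_eq_smul {P : Matrix m m ℂ} (hP : IsStarProjection P) (htr : P.trace = 1)
    {c : ℂ} (hc : 0 ≤ c) : ∃ y, vecMulVec y (star y) = c • P := by
  obtain ⟨y, hy, rfl⟩ := exists_eq_lineProj hP htr
  obtain ⟨c, hc, rfl⟩ := RCLike.nonneg_iff_exists_ofReal.1 hc
  obtain ⟨s, hs, hsy⟩ := RCLike.pos_iff_exists_ofReal.1 (dotProduct_star_self_pos_iff.2 hy)
  refine ⟨√(c / s) • y, ?_⟩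
  rw [star_smul, star_trivial, smul_vecMulVec, vecMulVec_smul, ← smul_lineProj, ← hsy, smul_smul,
    Real.mul_self_sqrt (by positivity), RCLike.real_smul_eq_coe_smul (K := ℂ), smul_smul,
    ← RCLike.ofReal_mul, div_mul_cancel₀ _ hs.ne']

lemma trace_vecMulVec_mul_vecMulVec (x y : m → ℂ) :
    (vecMulVec x (star x) * vecMulVec y (star y)).trace = Complex.normSq (star x ⬝ᵥ y) := by
  rw [vecMulVec_mul_vecMulVec, trace_vecMulVec, dotProduct_smul, dotProduct_comm x, smul_eq_mul,
    star_dotProduct y x, Complex.star_def, Complex.mul_conj]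

lemma eq_of_forall_trace_mul_vecMulVec_eq {A B : Matrix m m ℂ}
    (h : ∀ x, (A * vecMulVec x (star x)).trace = (B * vecMulVec x (star x)).trace) : A = B := by
  classical
  refine toEuclideanLin.injective ((ext_inner_map _ _).1 fun x => ?_)
  have hx := h x.ofLp
  rw [mul_vecMulVec, mul_vecMulVec, trace_vecMulVec, trace_vecMulVec] at hx
  rw [← inner_conj_symm, ← inner_conj_symm (toEuclideanLin B x)]
  exact congrArg (starRingEnd ℂ) hx

end Line

section PairVec

variable {m : Type*} [DecidableEq m] {j k : m}

/-- The test vector `e_j + c e_k`. -/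
def pairVec (j k : m) (c : ℂ) : m → ℂ :=
  Pi.single j 1 + Pi.single k c

/-- The sign `ε = ±1` for which a normalized Wigner symmetry `T` maps the line of `e_j + i e_k` to
that of `e_j + ε i e_k`. -/
noncomputable def pairSign (T : (m → ℂ) → (m → ℂ)) (j k : m) : ℝ :=
  (T (pairVec j k Complex.I) k * star (T (pairVec j k Complex.I) j)).im

lemma pairVec_apply_left (hjk : j ≠ k) (c : ℂ) : pairVec j k c j = 1 := by simp [pairVec, hjk]

lemma pairVec_apply_right (hjk : j ≠ k) (c : ℂ) : pairVec j k c k = c := by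
  simp [pairVec, hjk.symm]

lemma pairVec_apply_of_ne (c : ℂ) (i : m) (hi : i ≠ j ∧ i ≠ k) : pairVec j k c i = 0 := by
  simp [pairVec, hi.1, hi.2]

end PairVec

section Wigner

variable {m : Type*} [Fintype m]

/-- A Wigner symmetry of `ℂᵐ`: a map preserving transition probabilities, not assumed to be linear
or continuous. -/
def IsWignerSymmetry (T : (m → ℂ) → (m → ℂ)) : Prop :=
  ∀ x y, Complex.normSq (star (T x) ⬝ᵥ T y) = Complex.normSq (star x ⬝ᵥ y)

/-- A Wigner symmetry fixing, up to phases, the coordinate axes and the all-ones vector. -/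
structure IsNormalizedWigner (T : (m → ℂ) → (m → ℂ)) : Prop where
  isWignerSymmetry : IsWignerSymmetry T
  normSq_apply : ∀ x i, Complex.normSq (T x i) = Complex.normSq (x i)
  normSq_sum : ∀ x, Complex.normSq (∑ i, T x i) = Complex.normSq (∑ i, x i)

lemma IsWignerSymmetry.dotProduct_self {T : (m → ℂ) → (m → ℂ)} (hT : IsWignerSymmetry T)
    (x : m → ℂ) : star (T x) ⬝ᵥ T x = star x ⬝ᵥ x := by
  obtain ⟨a, ha, hTa⟩ := RCLike.nonneg_iff_exists_ofReal.1 (dotProduct_star_self_nonneg (T x))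
  obtain ⟨b, hb, hxb⟩ := RCLike.nonneg_iff_exists_ofReal.1 (dotProduct_star_self_nonneg x)
  have h := hT x x
  rw [← hTa, ← hxb, RCLike.ofReal_eq_complex_ofReal, Complex.normSq_ofReal, Complex.normSq_ofReal,
    mul_self_inj ha hb] at h
  rw [← hTa, ← hxb, h]

lemma star_dotProduct_eq_add_of_support {j k : m} (hjk : j ≠ k) {w : m → ℂ}
    (hw : ∀ i, i ≠ j ∧ i ≠ k → w i = 0) (y : m → ℂ) :
    star w ⬝ᵥ y = star (w j) * y j + star (w k) * y k := by
  rw [dotProduct, Fintype.sum_eq_add j k hjk fun i hi => by simp [hw i hi]]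
  rfl

namespace IsNormalizedWigner

variable {T : (m → ℂ) → (m → ℂ)} {j k l : m}

section PairVec

variable [DecidableEq m]

lemma apply_pairVec_of_ne (hT : IsNormalizedWigner T) (c : ℂ) (i : m) (hi : i ≠ j ∧ i ≠ k) :
    T (pairVec j k c) i = 0 := by
  rw [← Complex.normSq_eq_zero, hT.normSq_apply, pairVec_apply_of_ne c i hi, map_zero]

lemma re_apply_pairVec_mul (hT : IsNormalizedWigner T) (hjk : j ≠ k) (c : ℂ) (x : m → ℂ) :
    (T (pairVec j k c) k * star (T (pairVec j k c) j) * (T x j * star (T x k))).re =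
      (c * (x j * star (x k))).re := by
  have h := hT.isWignerSymmetry (pairVec j k c) x
  rw [star_dotProduct_eq_add_of_support hjk (hT.apply_pairVec_of_ne c),
    star_dotProduct_eq_add_of_support hjk (pairVec_apply_of_ne c), Complex.normSq_add,
    Complex.normSq_add] at h
  simp only [Complex.star_def, Complex.normSq_conj, hT.normSq_apply, map_mul, Complex.conj_conj,
    pairVec_apply_left hjk, pairVec_apply_right hjk, map_one, one_mul] at h
  convert mul_left_cancel₀ two_ne_zero (add_left_cancel h) using 2 <;>
  · rw [Complex.star_def]
    ring

lemma normSq_apply_pairVec_mul_star (hT : IsNormalizedWigner T) (hjk : j ≠ k) (c : ℂ) :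
    Complex.normSq (T (pairVec j k c) k * star (T (pairVec j k c) j)) = Complex.normSq c := by
  rw [Complex.normSq_mul, Complex.star_def, Complex.normSq_conj, hT.normSq_apply, hT.normSq_apply,
    pairVec_apply_left hjk, pairVec_apply_right hjk, map_one, mul_one]

lemma apply_pairVec_one_mul_star (hT : IsNormalizedWigner T) (hjk : j ≠ k) :
    T (pairVec j k 1) k * star (T (pairVec j k 1) j) = 1 := by
  have hre : (T (pairVec j k 1) k * star (T (pairVec j k 1) j)).re = 1 := by
    have h := hT.normSq_sum (pairVec j k 1)
    rw [Fintype.sum_eq_add k j hjk.symm fun i hi => hT.apply_pairVec_of_ne 1 i hi.symm,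
      Fintype.sum_eq_add k j hjk.symm fun i hi => pairVec_apply_of_ne 1 i hi.symm,
      Complex.normSq_add, Complex.normSq_add, hT.normSq_apply, hT.normSq_apply,
      pairVec_apply_left hjk, pairVec_apply_right hjk] at h
    simpa using h
  have hnorm := hT.normSq_apply_pairVec_mul_star hjk 1
  rw [Complex.normSq_apply, hre, map_one, one_mul, add_eq_left, mul_self_eq_zero] at hnorm
  exact Complex.ext hre hnorm

end PairVec

lemma re_mul_star_apply (hT : IsNormalizedWigner T) (x : m → ℂ) (j k : m) :
    (T x j * star (T x k)).re = (x j * star (x k)).re := by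
  classical
  rcases eq_or_ne j k with rfl | hjk
  · rw [Complex.star_def, Complex.mul_conj, Complex.mul_conj, hT.normSq_apply]
  · simpa only [hT.apply_pairVec_one_mul_star hjk, one_mul] using hT.re_apply_pairVec_mul hjk 1 x

section PairSign

variable [DecidableEq m]

lemma apply_pairVec_I_mul_star (hT : IsNormalizedWigner T) (hjk : j ≠ k) :
    T (pairVec j k Complex.I) k * star (T (pairVec j k Complex.I) j) =
      pairSign T j k * Complex.I := by
  apply Complex.ext
  · rw [hT.re_mul_star_apply, pairVec_apply_left hjk, pairVec_apply_right hjk]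
    simp
  · simp [pairSign]

lemma pairSign_mul_self (hT : IsNormalizedWigner T) (hjk : j ≠ k) :
    pairSign T j k * pairSign T j k = 1 := by
  have h := hT.normSq_apply_pairVec_mul_star hjk Complex.I
  rwa [hT.apply_pairVec_I_mul_star hjk, Complex.normSq_mul, Complex.normSq_ofReal, Complex.normSq_I,
    mul_one] at h

lemma im_mul_star_apply (hT : IsNormalizedWigner T) (hjk : j ≠ k) (x : m → ℂ) :
    (T x j * star (T x k)).im = pairSign T j k * (x j * star (x k)).im := by
  have h := hT.re_apply_pairVec_mul hjk Complex.I x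
  rw [hT.apply_pairVec_I_mul_star hjk, mul_assoc, Complex.re_ofReal_mul, Complex.I_mul_re,
    Complex.I_mul_re, mul_neg, neg_inj] at h
  rw [← h, ← mul_assoc, hT.pairSign_mul_self hjk, one_mul]

lemma mul_star_apply (hT : IsNormalizedWigner T) (hjk : j ≠ k) (x : m → ℂ) :
    T x j * star (T x k) =
      (x j * star (x k)).re + pairSign T j k * (x j * star (x k)).im * Complex.I := by
  rw [← Complex.re_add_im (T x j * star (T x k)), hT.re_mul_star_apply, hT.im_mul_star_apply hjk,
    Complex.ofReal_mul]

lemma pairSign_comm (hT : IsNormalizedWigner T) (hjk : j ≠ k) :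
    pairSign T j k = pairSign T k j := by
  have h := hT.im_mul_star_apply hjk.symm (pairVec j k Complex.I)
  rw [pairVec_apply_left hjk, pairVec_apply_right hjk] at h
  simpa [pairSign] using h

/-- The three signs are tied together by the rank-one identity
`(y_j ȳ_k) (y_k ȳ_l) = (y_j ȳ_l) |y_k|²` at the image `y` of `e_j + i e_k + e_l`. -/
lemma pairSign_eq_pairSign (hT : IsNormalizedWigner T) (hjk : j ≠ k) (hkl : k ≠ l) (hjl : j ≠ l) :
    pairSign T j k = pairSign T k l := by
  set x : m → ℂ := pairVec j k Complex.I + Pi.single l 1 with hx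
  have hxj : x j = 1 := by simp [hx, pairVec, hjk, hjl]
  have hxk : x k = Complex.I := by simp [hx, pairVec, hjk.symm, hkl]
  have hxl : x l = 1 := by simp [hx, pairVec, hjl.symm, hkl.symm]
  have hTjk : T x j * star (T x k) = -(pairSign T j k * Complex.I) := by
    rw [hT.mul_star_apply hjk, hxj, hxk]
    simp
  have hTkl : T x k * star (T x l) = pairSign T k l * Complex.I := by
    rw [hT.mul_star_apply hkl, hxk, hxl]
    simp
  have hTjl : T x j * star (T x l) = 1 := by
    rw [hT.mul_star_apply hjl, hxj, hxl]
    simp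
  have hTkk : T x k * star (T x k) = 1 := by
    simp [Complex.mul_conj, hT.normSq_apply, hxk]
  have hprod : (pairSign T j k : ℂ) * pairSign T k l = 1 :=
    calc (pairSign T j k : ℂ) * pairSign T k l
        = T x j * star (T x k) * (T x k * star (T x l)) := by
          rw [hTjk, hTkl]
          linear_combination (pairSign T j k * pairSign T k l : ℂ) * Complex.I_mul_I
      _ = T x j * star (T x l) * (T x k * star (T x k)) := by ring
      _ = 1 := by rw [hTjl, hTkk, one_mul]
  have hprod' : pairSign T j k * pairSign T k l = 1 := by exact_mod_cast hprod
  linear_combination pairSign T k l * hT.pairSign_mul_self hjk - pairSign T j k * hprod'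

lemma pairSign_eq_of_ne (hT : IsNormalizedWigner T) (hjk : j ≠ k) (hjl : j ≠ l) :
    pairSign T j k = pairSign T j l := by
  rcases eq_or_ne k l with rfl | hkl
  · rfl
  · rw [hT.pairSign_comm hjk, hT.pairSign_eq_pairSign hjk.symm hjl hkl]

lemma exists_pairSign_eq (hT : IsNormalizedWigner T) :
    ∃ ε : ℝ, (ε = 1 ∨ ε = -1) ∧ ∀ j k, j ≠ k → pairSign T j k = ε := by
  by_cases hm : ∃ a b : m, a ≠ b
  · obtain ⟨a, b, hab⟩ := hm
    refine ⟨pairSign T a b, mul_self_eq_one_iff.1 (hT.pairSign_mul_self hab), fun j k hjk => ?_⟩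
    rcases eq_or_ne j a with rfl | hja
    · exact hT.pairSign_eq_of_ne hjk hab
    · rw [hT.pairSign_eq_of_ne hjk hja, hT.pairSign_comm hja, hT.pairSign_eq_of_ne hja.symm hab]
  · exact ⟨1, Or.inl rfl, fun j k hjk => absurd ⟨j, k, hjk⟩ hm⟩

end PairSign

lemma mul_star_apply_eq_or (hT : IsNormalizedWigner T) :
    (∀ x j k, T x j * star (T x k) = x j * star (x k)) ∨
      (∀ x j k, T x j * star (T x k) = star (x j) * x k) := by
  classical
  have hdiag (x : m → ℂ) (j : m) : T x j * star (T x j) = x j * star (x j) := by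
    rw [Complex.star_def, Complex.mul_conj, Complex.mul_conj, hT.normSq_apply]
  obtain ⟨ε, rfl | rfl, hε⟩ := hT.exists_pairSign_eq
  · refine Or.inl fun x j k => ?_
    rcases eq_or_ne j k with rfl | hjk
    · exact hdiag x j
    · rw [hT.mul_star_apply hjk, hε j k hjk, Complex.ofReal_one, one_mul, Complex.re_add_im]
  · refine Or.inr fun x j k => ?_
    rcases eq_or_ne j k with rfl | hjk
    · rw [hdiag, mul_comm]
    · rw [hT.mul_star_apply hjk, hε j k hjk]
      apply Complex.ext
      · simp
      · simp
        ring

end IsNormalizedWigner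

variable [DecidableEq m]

namespace IsWignerSymmetry

variable {T : (m → ℂ) → (m → ℂ)}

lemma mulVec (hT : IsWignerSymmetry T) {W : Matrix m m ℂ} (hW : W ∈ unitaryGroup m ℂ) :
    IsWignerSymmetry fun x => W *ᵥ T x := by
  intro x y
  rw [star_mulVec, dotProduct_mulVec, vecMul_vecMul, ← star_eq_conjTranspose,
    mem_unitaryGroup_iff'.1 hW, vecMul_one]
  exact hT x y

lemma exists_unitary_normSq_apply (hT : IsWignerSymmetry T) :
    ∃ W ∈ unitaryGroup m ℂ, ∀ x i, Complex.normSq ((Wᴴ *ᵥ T x) i) = Complex.normSq (x i) := by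
  let W : Matrix m m ℂ := of fun a i => T (Pi.single i 1) a
  have hW (x : m → ℂ) (i : m) : (Wᴴ *ᵥ x) i = star (T (Pi.single i 1)) ⬝ᵥ x := rfl
  refine ⟨W, mem_unitaryGroup_iff'.2 ?_, fun x i => ?_⟩
  · ext i j
    have hWW : (star W * W) i j = star (T (Pi.single i 1)) ⬝ᵥ T (Pi.single j 1) := rfl
    rcases eq_or_ne i j with rfl | hij
    · rw [hWW, hT.dotProduct_self]
      simp
    · rw [hWW, one_apply_ne hij, ← Complex.normSq_eq_zero, hT]
      simp [hij]
  · rw [hW, hT]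
    simp

lemma exists_unitary_isNormalizedWigner (hT : IsWignerSymmetry T) :
    ∃ V ∈ unitaryGroup m ℂ, IsNormalizedWigner fun x => Vᴴ *ᵥ T x := by
  obtain ⟨W, hW, hWT⟩ := hT.exists_unitary_normSq_apply
  let D : Matrix m m ℂ := diagonal (Wᴴ *ᵥ T 1)
  have hphase (i : m) : star ((Wᴴ *ᵥ T 1) i) * (Wᴴ *ᵥ T 1) i = 1 := by
    rw [Complex.star_def, ← Complex.normSq_eq_conj_mul_self, hWT]
    simp
  have hD : D ∈ unitaryGroup m ℂ := by
    rw [mem_unitaryGroup_iff', star_eq_conjTranspose, diagonal_conjTranspose, diagonal_mul_diagonal,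
      ← diagonal_one]
    exact congrArg diagonal (funext hphase)
  have hDW (x : m → ℂ) : (W * D)ᴴ *ᵥ T x = Dᴴ *ᵥ (Wᴴ *ᵥ T x) := by
    rw [conjTranspose_mul, mulVec_mulVec]
  have happly (x : m → ℂ) (i : m) :
      ((W * D)ᴴ *ᵥ T x) i = star ((Wᴴ *ᵥ T 1) i) * (Wᴴ *ᵥ T x) i := by
    rw [hDW, diagonal_conjTranspose, mulVec_diagonal]
    rfl
  have hsymm : IsWignerSymmetry fun x => (W * D)ᴴ *ᵥ T x :=
    hT.mulVec (Unitary.star_mem (mul_mem hW hD))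
  refine ⟨W * D, mul_mem hW hD, hsymm, fun x i => ?_, fun x => ?_⟩
  · rw [happly, Complex.normSq_mul, Complex.star_def, Complex.normSq_conj, hWT, hWT]
    simp
  · have hone : (W * D)ᴴ *ᵥ T 1 = 1 := funext fun i => (happly 1 i).trans (hphase i)
    have h := hsymm 1 x
    dsimp only at h
    rw [hone] at h
    simpa only [star_one, one_dotProduct] using h

theorem exists_unitary (hT : IsWignerSymmetry T) :
    ∃ V ∈ unitaryGroup m ℂ,
      (∀ x, vecMulVec (T x) (star (T x)) = V * vecMulVec x (star x) * Vᴴ) ∨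
      (∀ x, vecMulVec (T x) (star (T x)) = V * (vecMulVec x (star x))ᵀ * Vᴴ) := by
  obtain ⟨V, hV, hVT⟩ := hT.exists_unitary_isNormalizedWigner
  have hrec (x : m → ℂ) : vecMulVec (T x) (star (T x)) =
      V * vecMulVec (Vᴴ *ᵥ T x) (star (Vᴴ *ᵥ T x)) * Vᴴ := by
    rw [mul_vecMulVec, vecMulVec_mul, ← star_mulVec, mulVec_mulVec, ← star_eq_conjTranspose,
      mem_unitaryGroup_iff.1 hV, one_mulVec]
  refine ⟨V, hV, hVT.mul_star_apply_eq_or.imp (fun h x => ?_) fun h x => ?_⟩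
  · have : vecMulVec (Vᴴ *ᵥ T x) (star (Vᴴ *ᵥ T x)) = vecMulVec x (star x) := ext (h x)
    rw [hrec, this]
  · have : vecMulVec (Vᴴ *ᵥ T x) (star (Vᴴ *ᵥ T x)) = (vecMulVec x (star x))ᵀ := by
      rw [transpose_vecMulVec]
      exact ext (h x)
    rw [hrec, this]

end IsWignerSymmetry

end Wigner

section ProjectionTrace

variable {m : Type*} [Fintype m]

lemma ofReal_re_trace_mul {P Q : Matrix m m ℂ} (hP : IsSelfAdjoint P) (hQ : IsSelfAdjoint Q) :
    ((P * Q).trace.re : ℂ) = (P * Q).trace := by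
  rw [← Complex.conj_eq_iff_re, ← Complex.star_def, ← trace_conjTranspose, conjTranspose_mul,
    ← star_eq_conjTranspose, ← star_eq_conjTranspose, hP.star_eq, hQ.star_eq, trace_mul_comm]

lemma ofReal_re_trace_of_isStarProjection {P : Matrix m m ℂ} (hP : IsStarProjection P) :
    (P.trace.re : ℂ) = P.trace := by
  rw [← hP.isIdempotentElem, ofReal_re_trace_mul hP.isSelfAdjoint hP.isSelfAdjoint]

lemma re_trace_mul_le_re_trace {P Q : Matrix m m ℂ} (hP : IsStarProjection P)
    (hQ : IsStarProjection Q) : (P * Q).trace.re ≤ Q.trace.re := by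
  classical
  have h := (posSemidef_conjTranspose_mul_self ((1 - P) * Q)).trace_nonneg
  rw [conjTranspose_mul, ← star_eq_conjTranspose, ← star_eq_conjTranspose, hQ.isSelfAdjoint,
    hP.one_sub.isSelfAdjoint, mul_assoc, ← mul_assoc (1 - P), hP.one_sub.isIdempotentElem,
    trace_mul_comm, mul_assoc, hQ.isIdempotentElem, sub_mul, one_mul, trace_sub] at h
  exact sub_nonneg.1 (Complex.nonneg_iff.1 h).1

variable [DecidableEq m] {p : ℝ}

lemma schattenPow_sub_of_trace_eq_one (hp : p ≠ 0) {P Q : Matrix m m ℂ} (hP : IsStarProjection P)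
    (hQ : IsStarProjection Q) (htr : Q.trace = 1) :
    schattenPow p (P - Q) = P.trace.re - 1 + 2 * (1 - (P * Q).trace.re) ^ (p / 2) := by
  have hQPQ : Q * P * Q = (P * Q).trace.re • Q := by
    rw [RCLike.real_smul_eq_coe_smul (K := ℂ), RCLike.ofReal_eq_complex_ofReal,
      ofReal_re_trace_mul hP.isSelfAdjoint hQ.isSelfAdjoint]
    obtain ⟨x, -, rfl⟩ := exists_eq_lineProj hQ htr
    exact lineProj_mul_mul_lineProj x P
  rw [schattenPow_sub_of_mul_mul_eq_smul hp hP hQ hQPQ, htr, Complex.one_re, mul_one]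

end ProjectionTrace

/-- An isometry, for the Schatten `p`-distance, of the set of orthogonal projections of `ℂᵐ` into
itself fixing `0`; the values of `φ` at other matrices are irrelevant. -/
structure IsProjectionIsometry {m : Type*} [Fintype m] [DecidableEq m] (p : ℝ)
    (φ : Matrix m m ℂ → Matrix m m ℂ) : Prop where
  isStarProjection : ∀ {P}, IsStarProjection P → IsStarProjection (φ P)
  map_zero : φ 0 = 0
  schattenPow_sub : ∀ {P Q}, IsStarProjection P → IsStarProjection Q →
    schattenPow p (φ P - φ Q) = schattenPow p (P - Q)

namespace IsProjectionIsometry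

variable {m : Type*} [Fintype m] [DecidableEq m] {p : ℝ} {φ : Matrix m m ℂ → Matrix m m ℂ}
  {P Q : Matrix m m ℂ}

lemma trace_map (hφ : IsProjectionIsometry p φ) (hp : p ≠ 0) (hP : IsStarProjection P) :
    (φ P).trace = P.trace := by
  have h := hφ.schattenPow_sub hP (.zero _)
  rw [hφ.map_zero, sub_zero, sub_zero, schattenPow_of_isStarProjection hp hP,
    schattenPow_of_isStarProjection hp (hφ.isStarProjection hP)] at h
  rw [← ofReal_re_trace_of_isStarProjection hP,
    ← ofReal_re_trace_of_isStarProjection (hφ.isStarProjection hP), h]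

lemma trace_map_mul_map (hφ : IsProjectionIsometry p φ) (hp : p ≠ 0) (hP : IsStarProjection P)
    (hQ : IsStarProjection Q) (htr : Q.trace = 1) : (φ P * φ Q).trace = (P * Q).trace := by
  have hφP := hφ.isStarProjection hP
  have hφQ := hφ.isStarProjection hQ
  have hφtr : (φ Q).trace = 1 := (hφ.trace_map hp hQ).trans htr
  have h := hφ.schattenPow_sub hP hQ
  rw [schattenPow_sub_of_trace_eq_one hp hφP hφQ hφtr,
    schattenPow_sub_of_trace_eq_one hp hP hQ htr, hφ.trace_map hp hP] at h
  have hle := re_trace_mul_le_re_trace hP hQ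
  have hφle := re_trace_mul_le_re_trace hφP hφQ
  rw [htr, Complex.one_re] at hle
  rw [hφtr, Complex.one_re] at hφle
  have hre : (φ P * φ Q).trace.re = (P * Q).trace.re :=
    sub_right_inj.1 <| (Real.rpow_left_inj (sub_nonneg.2 hφle) (sub_nonneg.2 hle)
      (div_ne_zero hp two_ne_zero)).1 (mul_left_cancel₀ two_ne_zero (add_left_cancel h))
  rw [← ofReal_re_trace_mul hφP.isSelfAdjoint hφQ.isSelfAdjoint, hre,
    ofReal_re_trace_mul hP.isSelfAdjoint hQ.isSelfAdjoint]

lemma exists_vecMulVec_eq (hφ : IsProjectionIsometry p φ) (hp : p ≠ 0) (x : m → ℂ) :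
    ∃ y, vecMulVec y (star y) = (star x ⬝ᵥ x) • φ (lineProj x) := by
  rcases eq_or_ne x 0 with rfl | hx
  · exact ⟨0, by simp⟩
  · have hx' := isStarProjection_lineProj x
    exact exists_vecMulVec_eq_smul (hφ.isStarProjection hx')
      ((hφ.trace_map hp hx').trans (trace_lineProj hx)) (dotProduct_star_self_nonneg x)

lemma trace_map_mul_smul_map_lineProj (hφ : IsProjectionIsometry p φ) (hp : p ≠ 0)
    (hP : IsStarProjection P) (x : m → ℂ) :
    (φ P * ((star x ⬝ᵥ x) • φ (lineProj x))).trace = (P * vecMulVec x (star x)).trace := by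
  rw [mul_smul_comm, trace_smul, ← smul_lineProj x, mul_smul_comm, trace_smul]
  rcases eq_or_ne x 0 with rfl | hx
  · simp
  · rw [hφ.trace_map_mul_map hp hP (isStarProjection_lineProj x) (trace_lineProj hx)]

lemma exists_isWignerSymmetry (hφ : IsProjectionIsometry p φ) (hp : p ≠ 0) :
    ∃ T : (m → ℂ) → (m → ℂ), IsWignerSymmetry T ∧ ∀ {P}, IsStarProjection P → ∀ x,
      (φ P * vecMulVec (T x) (star (T x))).trace = (P * vecMulVec x (star x)).trace := by
  choose T hT using hφ.exists_vecMulVec_eq hp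
  have htrace {P : Matrix m m ℂ} (hP : IsStarProjection P) (x : m → ℂ) :
      (φ P * vecMulVec (T x) (star (T x))).trace = (P * vecMulVec x (star x)).trace := by
    rw [hT, hφ.trace_map_mul_smul_map_lineProj hp hP]
  refine ⟨T, fun x y => ?_, htrace⟩
  rw [← Complex.ofReal_inj, ← trace_vecMulVec_mul_vecMulVec, ← trace_vecMulVec_mul_vecMulVec, hT x,
    smul_mul_assoc, trace_smul, htrace (isStarProjection_lineProj x), ← trace_smul,
    ← smul_mul_assoc, smul_lineProj]

theorem exists_unitary (hφ : IsProjectionIsometry p φ) (hp : p ≠ 0) :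
    ∃ V ∈ unitaryGroup m ℂ, (∀ P, IsStarProjection P → φ P = V * P * Vᴴ) ∨
      (∀ P, IsStarProjection P → φ P = V * Pᵀ * Vᴴ) := by
  obtain ⟨T, hT, htrace⟩ := hφ.exists_isWignerSymmetry hp
  obtain ⟨V, hV, hVT⟩ := hT.exists_unitary
  have hVV : V * Vᴴ = 1 := mem_unitaryGroup_iff.1 hV
  have hconj {A B : Matrix m m ℂ} (h : Vᴴ * A * V = B) : A = V * B * Vᴴ := by
    rw [← h, ← mul_assoc, ← mul_assoc, hVV, one_mul, mul_assoc, hVV, mul_one]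
  have hcycle (A B : Matrix m m ℂ) : (Vᴴ * A * V * B).trace = (A * (V * B * Vᴴ)).trace := by
    rw [mul_assoc, mul_assoc, trace_mul_comm, mul_assoc]
  refine ⟨V, hV, hVT.imp (fun h P hP => hconj ?_) fun h P hP => hconj ?_⟩
  · refine eq_of_forall_trace_mul_vecMulVec_eq fun x => ?_
    rw [hcycle, ← h, htrace hP]
  · rw [← transpose_inj, transpose_transpose]
    refine eq_of_forall_trace_mul_vecMulVec_eq fun x => ?_
    rw [← trace_transpose, transpose_mul, transpose_transpose, trace_mul_comm, hcycle, ← h,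
      htrace hP]

end IsProjectionIsometry

section GramFamily

variable {K V ι : Type*} [Field K] [AddCommGroup V] [Module K V] {B : LinearMap.BilinForm K V}

lemma sum_smul_eq_zero_of_gram_eq [Fintype ι] (hB : ∀ x, B x x = 0 → x = 0) {v w : ι → V}
    (h : ∀ i j, B (w i) (w j) = B (v i) (v j)) {c : ι → K} (hc : ∑ i, c i • v i = 0) :
    ∑ i, c i • w i = 0 := by
  refine hB _ ?_
  calc B (∑ i, c i • w i) (∑ i, c i • w i) = B (∑ i, c i • v i) (∑ i, c i • v i) := by
        simp only [LinearMap.BilinForm.sum_left, LinearMap.BilinForm.sum_right,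
          LinearMap.BilinForm.smul_left, LinearMap.BilinForm.smul_right, h]
    _ = 0 := by rw [hc, map_zero]

lemma linearIndependent_of_gram_eq [Finite ι] (hB : ∀ x, B x x = 0 → x = 0) {v w : ι → V}
    (h : ∀ i j, B (w i) (w j) = B (v i) (v j)) (hv : LinearIndependent K v) :
    LinearIndependent K w := by
  have := Fintype.ofFinite ι
  exact Fintype.linearIndependent_iff.2 fun c hc =>
    Fintype.linearIndependent_iff.1 hv c <|
      sum_smul_eq_zero_of_gram_eq hB (fun i j => (h i j).symm) hc

lemma span_image_eq_span_of_gram_eq [FiniteDimensional K V] (hB : ∀ x, B x x = 0 → x = 0)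
    {s : Set V} {f : V → V} (hf : Set.MapsTo f s s)
    (h : ∀ x ∈ s, ∀ y ∈ s, B (f x) (f y) = B x y) :
    Submodule.span K (f '' s) = Submodule.span K s := by
  obtain ⟨b, hbs, hspan, hb⟩ := exists_linearIndependent K s
  have : Fintype b := hb.setFinite.fintype
  have hfb : LinearIndependent K fun x : b => f x :=
    linearIndependent_of_gram_eq hB (fun x y => h x (hbs x.2) y (hbs y.2)) hb
  have hrange : Set.range (fun x : b => f x) ⊆ f '' s :=
    Set.range_subset_iff.2 fun x => Set.mem_image_of_mem f (hbs x.2)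
  refine Submodule.eq_of_le_of_finrank_le (Submodule.span_mono hf.image_subset) ?_
  calc Module.finrank K (Submodule.span K s) = Fintype.card b := by
        rw [← hspan, ← finrank_span_eq_card hb, Subtype.range_coe]
    _ = Module.finrank K (Submodule.span K (Set.range fun x : b => f x)) :=
        (finrank_span_eq_card hfb).symm
    _ ≤ Module.finrank K (Submodule.span K (f '' s)) :=
        Submodule.finrank_mono (Submodule.span_mono hrange)

end GramFamily

section Reflection

variable {m : Type*} [DecidableEq m] {P U : Matrix m m ℂ}

lemma isSelfAdjoint_one_sub_two_smul (hP : IsSelfAdjoint P) :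
    IsSelfAdjoint (1 - (2 : ℝ) • P) :=
  .sub conjTranspose_one (.smul (star_trivial _) hP)

variable [Fintype m]

lemma one_sub_two_smul_mem_unitaryGroup (hP : IsStarProjection P) :
    1 - (2 : ℝ) • P ∈ unitaryGroup m ℂ := by
  have h := (-⟨2 * P - 1, hP.two_mul_sub_one_mem_unitary⟩ : unitary (Matrix m m ℂ)).2
  rwa [Unitary.coe_neg, neg_sub, two_mul, ← two_smul ℝ] at h

lemma isStarProjection_half_one_sub (hU : U ∈ unitaryGroup m ℂ) (hsa : IsSelfAdjoint U) :
    IsStarProjection ((1 / 2 : ℝ) • (1 - U)) := by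
  refine ⟨?_, .smul (star_trivial _) (.sub (.one _) hsa)⟩
  have hUU : U * U = 1 := by rw [← mem_unitaryGroup_iff.1 hU, hsa.star_eq]
  simp only [IsIdempotentElem, smul_mul_smul_comm, mul_sub, sub_mul, hUU, one_mul, mul_one]
  module

end Reflection

section ReTraceForm

variable {m : Type*} [Fintype m]

/-- The real inner product `(A, B) ↦ Re Tr (Aᴴ B)` on complex matrices, for which the self-adjoint
matrices are the orthogonal complement of the skew-adjoint ones. -/
noncomputable def reTraceForm (m : Type*) [Fintype m] : LinearMap.BilinForm ℝ (Matrix m m ℂ) :=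
  LinearMap.mk₂ ℝ (fun A B => (Aᴴ * B).trace.re) (by simp [add_mul]) (by simp) (by simp [mul_add])
    (by simp)

lemma reTraceForm_apply (A B : Matrix m m ℂ) : reTraceForm m A B = (Aᴴ * B).trace.re := rfl

lemma eq_zero_of_reTraceForm_self_eq_zero (A : Matrix m m ℂ) (h : reTraceForm m A A = 0) :
    A = 0 := by
  rw [← trace_conjTranspose_mul_self_eq_zero_iff]
  have hnonneg := (posSemidef_conjTranspose_mul_self A).trace_nonneg
  exact Complex.ext h (Complex.nonneg_iff.1 hnonneg).2.symm

variable [DecidableEq m]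

/-- The skew-adjoint unitary matrices. -/
def skewUnitary (m : Type*) [Fintype m] [DecidableEq m] : Set (Matrix m m ℂ) :=
  {S | S ∈ unitaryGroup m ℂ ∧ Sᴴ = -S}

lemma reTraceForm_eq_zero_of_mem_skewUnitary {U S : Matrix m m ℂ} (hU : IsSelfAdjoint U)
    (hS : S ∈ skewUnitary m) : reTraceForm m U S = 0 := by
  have h : star (Uᴴ * S).trace = -(Uᴴ * S).trace := by
    rw [← trace_conjTranspose, conjTranspose_mul, conjTranspose_conjTranspose, hS.2,
      ← star_eq_conjTranspose, hU.star_eq, neg_mul, trace_neg, trace_mul_comm]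
  have := congrArg Complex.re h
  rw [Complex.star_def, Complex.conj_re, Complex.neg_re] at this
  rw [reTraceForm_apply]
  linarith

lemma I_smul_mem_skewUnitary {U : Matrix m m ℂ} (hU : U ∈ unitaryGroup m ℂ)
    (hsa : IsSelfAdjoint U) : Complex.I • U ∈ skewUnitary m := by
  have hstar : star (Complex.I • U) = -(Complex.I • U) := by
    rw [star_smul, hsa.star_eq, Complex.star_def, Complex.conj_I, neg_smul]
  refine ⟨mem_unitaryGroup_iff.2 ?_, hstar⟩
  rw [hstar, mul_neg, smul_mul_smul_comm, Complex.I_mul_I, neg_one_smul, neg_neg]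
  rw [← mem_unitaryGroup_iff.1 hU, hsa.star_eq]

lemma isSelfAdjoint_of_forall_reTraceForm_eq_zero {W : Matrix m m ℂ}
    (h : ∀ S ∈ skewUnitary m, reTraceForm m W S = 0) : IsSelfAdjoint W := by
  have him {P : Matrix m m ℂ} (hP : IsStarProjection P) :
      2 * (Wᴴ * P).trace.im = Wᴴ.trace.im := by
    have hS := h _ (I_smul_mem_skewUnitary (one_sub_two_smul_mem_unitaryGroup hP)
      (isSelfAdjoint_one_sub_two_smul hP.isSelfAdjoint))
    rw [reTraceForm_apply, mul_smul_comm, trace_smul, mul_sub, mul_one, mul_smul_comm, trace_sub,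
      trace_smul, smul_eq_mul, Complex.I_mul_re, Complex.sub_im, Complex.smul_im, smul_eq_mul] at hS
    linarith
  have htr : Wᴴ.trace.im = 0 := by simpa using (him (.zero _)).symm
  have hreal (x : m → ℂ) : (Wᴴ * lineProj x).trace = (W * lineProj x).trace := by
    have hconj : (starRingEnd ℂ) (Wᴴ * lineProj x).trace = (W * lineProj x).trace := by
      rw [← Complex.star_def, ← trace_conjTranspose, conjTranspose_mul, conjTranspose_conjTranspose,
        ← star_eq_conjTranspose, isSelfAdjoint_lineProj, trace_mul_comm]
    rw [← hconj, eq_comm, Complex.conj_eq_iff_im]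
    linarith [him (isStarProjection_lineProj x)]
  refine eq_of_forall_trace_mul_vecMulVec_eq fun x => ?_
  rw [← smul_lineProj, mul_smul_comm, mul_smul_comm, trace_smul, trace_smul, star_eq_conjTranspose,
    hreal]

lemma mem_skewUnitary_iff {S : Matrix m m ℂ} (hS : S ∈ unitaryGroup m ℂ) :
    S ∈ skewUnitary m ↔ (3 / 5 : ℝ) • 1 + (4 / 5 : ℝ) • S ∈ unitaryGroup m ℂ := by
  have hSS : Sᴴ * S = 1 := mem_unitaryGroup_iff'.1 hS
  have hexp : star ((3 / 5 : ℝ) • 1 + (4 / 5 : ℝ) • S) * ((3 / 5 : ℝ) • 1 + (4 / 5 : ℝ) • S) - 1 =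
      (12 / 25 : ℝ) • (Sᴴ + S) := by
    simp only [star_add, star_smul, star_trivial, star_one, star_eq_conjTranspose, add_mul, mul_add,
      smul_mul_smul_comm, hSS, one_mul, mul_one]
    module
  rw [mem_unitaryGroup_iff', ← sub_eq_zero, hexp, smul_eq_zero_iff_right (by norm_num),
    ← eq_neg_iff_add_eq_zero]
  exact and_iff_right hS

end ReTraceForm

section UnitaryPair

variable {m : Type*} [Fintype m] [DecidableEq m] {U V : Matrix m m ℂ}

lemma conjTranspose_half_sub_mul_add (hU : U ∈ unitaryGroup m ℂ) (hV : V ∈ unitaryGroup m ℂ) :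
    ((1 / 2 : ℝ) • (U - V))ᴴ * ((1 / 2 : ℝ) • (U - V)) +
      ((1 / 2 : ℝ) • (U + V))ᴴ * ((1 / 2 : ℝ) • (U + V)) = 1 := by
  have hUU : Uᴴ * U = 1 := mem_unitaryGroup_iff'.1 hU
  have hVV : Vᴴ * V = 1 := mem_unitaryGroup_iff'.1 hV
  simp only [conjTranspose_smul, star_trivial, conjTranspose_sub, conjTranspose_add,
    smul_mul_smul_comm, sub_mul, add_mul, mul_sub, mul_add, hUU, hVV]
  module

lemma isIdempotentElem_half_sub_one_iff (hU : U ∈ unitaryGroup m ℂ) :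
    IsIdempotentElem (((1 / 2 : ℝ) • (U - 1))ᴴ * ((1 / 2 : ℝ) • (U - 1))) ↔ IsSelfAdjoint U := by
  have hUU : Uᴴ * U = 1 := mem_unitaryGroup_iff'.1 hU
  have hUU' : U * Uᴴ = 1 := mem_unitaryGroup_iff.1 hU
  have hB : ((1 / 2 : ℝ) • (U - 1))ᴴ * ((1 / 2 : ℝ) • (U - 1)) =
      (1 / 4 : ℝ) • ((2 : ℝ) • 1 - Uᴴ - U) := by
    simp only [conjTranspose_smul, star_trivial, conjTranspose_sub, conjTranspose_one,
      smul_mul_smul_comm, sub_mul, mul_sub, hUU, mul_one, one_mul]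
    module
  have hdefect : (1 / 4 : ℝ) • ((2 : ℝ) • 1 - Uᴴ - U) -
      (1 / 4 : ℝ) • ((2 : ℝ) • 1 - Uᴴ - U) * (1 / 4 : ℝ) • ((2 : ℝ) • 1 - Uᴴ - U) =
      (1 / 16 : ℝ) • ((Uᴴ - U)ᴴ * (Uᴴ - U)) := by
    simp only [conjTranspose_sub, conjTranspose_conjTranspose, sub_mul, mul_sub, smul_mul_assoc,
      mul_smul_comm, mul_one, one_mul, hUU, hUU']
    module
  rw [IsIdempotentElem, hB, eq_comm, ← sub_eq_zero, hdefect, smul_eq_zero_iff_right (by norm_num),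
    conjTranspose_mul_self_eq_zero, sub_eq_zero]
  rfl

end UnitaryPair

/-- An isometry, for the Schatten `p`-distance, of the unitary group of `ℂᵐ` into itself fixing `1`;
the values of `ψ` at other matrices are irrelevant. -/
structure IsUnitaryIsometry {m : Type*} [Fintype m] [DecidableEq m] (p : ℝ)
    (ψ : Matrix m m ℂ → Matrix m m ℂ) : Prop where
  map_mem : ∀ U ∈ unitaryGroup m ℂ, ψ U ∈ unitaryGroup m ℂ
  map_one : ψ 1 = 1
  schattenPow_sub : ∀ U ∈ unitaryGroup m ℂ, ∀ V ∈ unitaryGroup m ℂ,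
    schattenPow p (ψ U - ψ V) = schattenPow p (U - V)

namespace IsUnitaryIsometry

variable {m : Type*} [Fintype m] [DecidableEq m] {p : ℝ} {ψ : Matrix m m ℂ → Matrix m m ℂ}
  {U V : Matrix m m ℂ}

lemma schattenPow_half_sub (hψ : IsUnitaryIsometry p ψ) (hU : U ∈ unitaryGroup m ℂ)
    (hV : V ∈ unitaryGroup m ℂ) :
    schattenPow p ((1 / 2 : ℝ) • (ψ U - ψ V)) = schattenPow p ((1 / 2 : ℝ) • (U - V)) := by
  rw [schattenPow_smul p one_half_pos.le, schattenPow_smul p one_half_pos.le,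
    hψ.schattenPow_sub U hU V hV]

lemma map_neg_one (hψ : IsUnitaryIsometry p ψ) (hp : 0 < p) : ψ (-1) = -1 := by
  have hneg : (-1 : Matrix m m ℂ) ∈ unitaryGroup m ℂ := (-1 : unitaryGroup m ℂ).2
  have h := hψ.schattenPow_half_sub (one_mem _) hneg
  have hone : (1 / 2 : ℝ) • (1 - -1 : Matrix m m ℂ) = 1 := by module
  rw [hone, schattenPow_of_isStarProjection (P := 1) hp.ne' (.one _), trace_one,
    Complex.natCast_re] at h
  have hzero := eq_zero_of_schattenPow_eq_card hp
    (conjTranspose_half_sub_mul_add (hψ.map_mem 1 (one_mem _)) (hψ.map_mem _ hneg)) h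
  rwa [hψ.map_one, smul_eq_zero_iff_right one_half_pos.ne', add_eq_zero_iff_neg_eq, eq_comm]
    at hzero

lemma isSelfAdjoint_map_of_ne_two (hψ : IsUnitaryIsometry p ψ) (hp : 0 < p) (hp2 : p ≠ 2)
    (hU : U ∈ unitaryGroup m ℂ) (hsa : IsSelfAdjoint U) : IsSelfAdjoint (ψ U) := by
  have hneg : (-1 : Matrix m m ℂ) ∈ unitaryGroup m ℂ := (-1 : unitaryGroup m ℂ).2
  have hsub := hψ.schattenPow_half_sub hU (one_mem _)
  have hadd := hψ.schattenPow_half_sub hU hneg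
  rw [hψ.map_one] at hsub
  rw [hψ.map_neg_one hp, sub_neg_eq_add, sub_neg_eq_add] at hadd
  refine (isIdempotentElem_half_sub_one_iff (hψ.map_mem U hU)).1 ?_
  refine isIdempotentElem_of_schattenPow_add_schattenPow_eq_card hp.ne' hp2
    (conjTranspose_half_sub_mul_add (hψ.map_mem U hU) (one_mem _)) ?_
  rw [hsub, hadd]
  exact schattenPow_add_schattenPow_eq_card hp.ne' (conjTranspose_half_sub_mul_add hU (one_mem _))
    ((isIdempotentElem_half_sub_one_iff hU).2 hsa)

lemma reTraceForm_map (hψ : IsUnitaryIsometry 2 ψ) (hU : U ∈ unitaryGroup m ℂ)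
    (hV : V ∈ unitaryGroup m ℂ) : reTraceForm m (ψ U) (ψ V) = reTraceForm m U V := by
  have hpolar {U V : Matrix m m ℂ} (hU : U ∈ unitaryGroup m ℂ) (hV : V ∈ unitaryGroup m ℂ) :
      schattenPow 2 (U - V) = 2 * Fintype.card m - 2 * reTraceForm m U V := by
    have hUU : Uᴴ * U = 1 := mem_unitaryGroup_iff'.1 hU
    have hVV : Vᴴ * V = 1 := mem_unitaryGroup_iff'.1 hV
    have hVU : (Vᴴ * U).trace.re = (Uᴴ * V).trace.re := by
      rw [← Complex.conj_re, ← Complex.star_def, ← trace_conjTranspose, conjTranspose_mul,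
        conjTranspose_conjTranspose]
    simp only [schattenPow_two, conjTranspose_sub, sub_mul, mul_sub, hUU, hVV, trace_sub, trace_one,
      Complex.sub_re, Complex.natCast_re, hVU, reTraceForm_apply]
    ring
  have h := hψ.schattenPow_sub U hU V hV
  rw [hpolar hU hV, hpolar (hψ.map_mem U hU) (hψ.map_mem V hV)] at h
  linarith

lemma mapsTo_skewUnitary (hψ : IsUnitaryIsometry 2 ψ) :
    Set.MapsTo ψ (skewUnitary m) (skewUnitary m) := by
  intro S hS
  set R : Matrix m m ℂ := (3 / 5 : ℝ) • 1 + (4 / 5 : ℝ) • S with hR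
  have hRU : R ∈ unitaryGroup m ℂ := (mem_skewUnitary_iff hS.1).1 hS
  have hmem : ∀ i, ![R, 1, S] i ∈ unitaryGroup m ℂ :=
    Fin.forall_fin_succ.2 ⟨hRU, Fin.forall_fin_two.2 ⟨one_mem _, hS.1⟩⟩
  have hrel : ∑ i, ![1, -(3 / 5 : ℝ), -(4 / 5 : ℝ)] i • ![R, 1, S] i = 0 := by
    simp only [Fin.sum_univ_three, cons_val, hR]
    module
  have hψrel := sum_smul_eq_zero_of_gram_eq eq_zero_of_reTraceForm_self_eq_zero
    (fun i j => hψ.reTraceForm_map (hmem i) (hmem j)) hrel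
  simp only [Fin.sum_univ_three, cons_val, hψ.map_one] at hψrel
  have hψR : ψ R = (3 / 5 : ℝ) • 1 + (4 / 5 : ℝ) • ψ S := by
    rw [← sub_eq_zero, ← hψrel]
    module
  exact (mem_skewUnitary_iff (hψ.map_mem S hS.1)).2 (hψR ▸ hψ.map_mem R hRU)

lemma isSelfAdjoint_map_of_two (hψ : IsUnitaryIsometry 2 ψ) (hU : U ∈ unitaryGroup m ℂ)
    (hsa : IsSelfAdjoint U) : IsSelfAdjoint (ψ U) := by
  have hspan := span_image_eq_span_of_gram_eq eq_zero_of_reTraceForm_self_eq_zero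
    hψ.mapsTo_skewUnitary fun S hS T hT => hψ.reTraceForm_map hS.1 hT.1
  have hle : Submodule.span ℝ (ψ '' skewUnitary m) ≤ LinearMap.ker (reTraceForm m (ψ U)) := by
    rw [Submodule.span_le, Set.image_subset_iff]
    intro S hS
    change reTraceForm m (ψ U) (ψ S) = 0
    rw [hψ.reTraceForm_map hU hS.1, reTraceForm_eq_zero_of_mem_skewUnitary hsa hS]
  rw [hspan] at hle
  exact isSelfAdjoint_of_forall_reTraceForm_eq_zero fun S hS => hle (Submodule.subset_span hS)

lemma isSelfAdjoint_map (hψ : IsUnitaryIsometry p ψ) (hp : 0 < p) (hU : U ∈ unitaryGroup m ℂ)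
    (hsa : IsSelfAdjoint U) : IsSelfAdjoint (ψ U) := by
  rcases eq_or_ne p 2 with rfl | hp2
  · exact hψ.isSelfAdjoint_map_of_two hU hsa
  · exact hψ.isSelfAdjoint_map_of_ne_two hp hp2 hU hsa

lemma isProjectionIsometry (hψ : IsUnitaryIsometry p ψ) (hp : 0 < p) :
    IsProjectionIsometry p fun P => (1 / 2 : ℝ) • (1 - ψ (1 - (2 : ℝ) • P)) where
  isStarProjection hP :=
    isStarProjection_half_one_sub (hψ.map_mem _ (one_sub_two_smul_mem_unitaryGroup hP))
      (hψ.isSelfAdjoint_map hp (one_sub_two_smul_mem_unitaryGroup hP)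
        (isSelfAdjoint_one_sub_two_smul hP.isSelfAdjoint))
  map_zero := by rw [smul_zero, sub_zero, hψ.map_one, sub_self, smul_zero]
  schattenPow_sub {P Q} hP hQ := by
    have h := hψ.schattenPow_half_sub (one_sub_two_smul_mem_unitaryGroup hQ)
      (one_sub_two_smul_mem_unitaryGroup hP)
    have hPQ : (1 / 2 : ℝ) • (1 - (2 : ℝ) • Q - (1 - (2 : ℝ) • P)) = P - Q := by module
    rw [← smul_sub, sub_sub_sub_cancel_left, h, hPQ]

theorem exists_unitary (hψ : IsUnitaryIsometry p ψ) (hp : 0 < p) :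
    ∃ V ∈ unitaryGroup m ℂ,
      (∀ U ∈ unitaryGroup m ℂ, Uᴴ = U → ψ U = V * U * Vᴴ) ∨
      (∀ U ∈ unitaryGroup m ℂ, Uᴴ = U → ψ U = V * Uᵀ * Vᴴ) := by
  obtain ⟨V, hV, hφ⟩ := (hψ.isProjectionIsometry hp).exists_unitary hp.ne'
  have hVV : V * Vᴴ = 1 := mem_unitaryGroup_iff.1 hV
  have hinv (A : Matrix m m ℂ) : (1 : Matrix m m ℂ) - (2 : ℝ) • (1 / 2 : ℝ) • (1 - A) = A := by
    module
  refine ⟨V, hV, hφ.imp (fun h U hU hsa => ?_) fun h U hU hsa => ?_⟩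
  · have hP := h _ (isStarProjection_half_one_sub hU hsa)
    rw [hinv] at hP
    rw [← hinv (ψ U), hP, mul_smul_comm, smul_mul_assoc, mul_sub, sub_mul, mul_one, hVV, hinv]
  · have hP := h _ (isStarProjection_half_one_sub hU hsa)
    rw [hinv] at hP
    rw [← hinv (ψ U), hP, transpose_smul, transpose_sub, transpose_one, mul_smul_comm,
      smul_mul_assoc, mul_sub, sub_mul, mul_one, hVV, hinv]

end IsUnitaryIsometry

theorem stmt7_general {m : Type*} [Fintype m] [DecidableEq m] {p : ℝ} (hp : 0 < p)
    {ψ : Matrix m m ℂ → Matrix m m ℂ} (hmem : ∀ U ∈ unitaryGroup m ℂ, ψ U ∈ unitaryGroup m ℂ)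
    (hiso : ∀ U ∈ unitaryGroup m ℂ, ∀ V ∈ unitaryGroup m ℂ,
      lpnorm p (ψ U - ψ V) = lpnorm p (U - V))
    (hone : ψ 1 = 1) :
    ∃ V ∈ unitaryGroup m ℂ,
      (∀ U ∈ unitaryGroup m ℂ, Uᴴ = U → ψ U = V * U * Vᴴ) ∨
      (∀ U ∈ unitaryGroup m ℂ, Uᴴ = U → ψ U = V * Uᵀ * Vᴴ) :=
  have hψ : IsUnitaryIsometry p ψ :=
    ⟨hmem, hone, fun U hU V hV => schattenPow_eq_of_lpnorm_eq hp.ne' (hiso U hU V hV)⟩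
  hψ.exists_unitary hp

/-- A surjective `L^p`-isometry of the unitary group fixing `I` acts on self-adjoint
unitaries either as `U ↦ VUVᴴ` or as `U ↦ VUᵀVᴴ` for some fixed unitary `V`. -/
theorem stmt7 (n : ℕ) (hn : 1 ≤ n) (p : ℝ) (hp : 0 < p)
    (ψ : Matrix (Fin n) (Fin n) ℂ → Matrix (Fin n) (Fin n) ℂ)
    (hmem : ∀ U ∈ Matrix.unitaryGroup (Fin n) ℂ, ψ U ∈ Matrix.unitaryGroup (Fin n) ℂ)
    (hsurj : ∀ V ∈ Matrix.unitaryGroup (Fin n) ℂ,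
      ∃ U ∈ Matrix.unitaryGroup (Fin n) ℂ, ψ U = V)
    (hiso : ∀ U ∈ Matrix.unitaryGroup (Fin n) ℂ, ∀ V ∈ Matrix.unitaryGroup (Fin n) ℂ,
      lpnorm p (ψ U - ψ V) = lpnorm p (U - V))
    (hone : ψ 1 = 1) :
    ∃ V ∈ Matrix.unitaryGroup (Fin n) ℂ,
      (∀ U ∈ Matrix.unitaryGroup (Fin n) ℂ, Uᴴ = U → ψ U = V * U * Vᴴ) ∨
      (∀ U ∈ Matrix.unitaryGroup (Fin n) ℂ, Uᴴ = U → ψ U = V * Uᵀ * Vᴴ) :=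
  stmt7_general hp hmem hiso hone
end
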